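/- arXiv:2210.02540 — 5 statements merged into one kernel-verified Lean document; each statement's English description precedes it below -/
import Mathlib

section
/- Let k ≥ 1, α ∈ (−(k+1)/2, −k/2), and let g : (0,∞)^k → ℝ be measurable with g(c x) = c^α g(x) for all c > 0, and ∫_{(0,∞)^k} |g(y) g(1+y)| dy < ∞. Then for every λ > 0 and t ≥ 0, ∫_{ℝ^k} h_t^λ(x)² dx = 2 ∫_0^t ∫_0^{t−s} u^{2α+k} e^{−λ k u} ( ∫_{(0,∞)^k} g(y) g(1+y) e^{−2λ u ⟨1, y⟩} dy ) du ds, where ⟨1,y⟩ = y_1 + ⋯ + y_k, and all integrals converge absolutely. -/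
open MeasureTheory Real Set

/-- The kernel `h_t^λ` of the tempered generalized Hermite process. -/
noncomputable def tghKernel {k : ℕ} (g : (Fin k → ℝ) → ℝ) (lam t : ℝ)
    (x : Fin k → ℝ) : ℝ :=
  ∫ s in Set.Ioc (0 : ℝ) t,
    Set.indicator {s' : ℝ | ∀ i, x i < s'}
      (fun s' => g (fun i => s' - x i) * Real.exp (-lam * ∑ i, (s' - x i))) s

/-- The open positive orthant. -/
def posOrth (k : ℕ) : Set (Fin k → ℝ) := {y : Fin k → ℝ | ∀ i, 0 < y i}

lemma measurableSet_posOrth (k : ℕ) : MeasurableSet (posOrth k) := by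
  have : posOrth k = ⋂ i, {y : Fin k → ℝ | 0 < y i} := by
    ext y; simp [posOrth]
  rw [this]
  exact MeasurableSet.iInter fun i => measurableSet_lt measurable_const (measurable_pi_apply i)

/-- Tempered truncated kernel. -/
noncomputable def phi {k : ℕ} (g : (Fin k → ℝ) → ℝ) (lam : ℝ) : (Fin k → ℝ) → ℝ :=
  (posOrth k).indicator (fun y => g y * Real.exp (-lam * ∑ i, y i))

lemma measurable_phi {k : ℕ} {g : (Fin k → ℝ) → ℝ} (hg : Measurable g) (lam : ℝ) :
    Measurable (phi g lam) := by
  refine Measurable.indicator ?_ (measurableSet_posOrth k)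
  fun_prop

/-- Inner integral. -/
noncomputable def inn {k : ℕ} (g : (Fin k → ℝ) → ℝ) (lam u : ℝ) : ℝ :=
  ∫ y in posOrth k, g y * g (fun i => 1 + y i) * Real.exp (-2 * lam * u * ∑ i, y i)

/-- Full covariance. -/
noncomputable def cov {k : ℕ} (g : (Fin k → ℝ) → ℝ) (α lam u : ℝ) : ℝ :=
  u ^ (2 * α + (k : ℝ)) * Real.exp (-lam * (k : ℝ) * u) * inn g lam u

lemma meas_shift {k : ℕ} {g : (Fin k → ℝ) → ℝ} (hg : Measurable g) :
    Measurable (fun y : Fin k → ℝ => g (fun i => 1 + y i)) :=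
  hg.comp (measurable_pi_lambda _ fun i => by fun_prop)

lemma inn_integrable {k : ℕ} {g : (Fin k → ℝ) → ℝ} (hg : Measurable g)
    (hint : IntegrableOn (fun y : Fin k → ℝ => |g y * g (fun i => 1 + y i)|) (posOrth k))
    {lam u : ℝ} (hlam : 0 < lam) (hu : 0 < u) :
    IntegrableOn (fun y : Fin k → ℝ => g y * g (fun i => 1 + y i) *
      Real.exp (-2 * lam * u * ∑ i, y i)) (posOrth k) := by
  have hm := meas_shift hg
  refine Integrable.mono' hint (by fun_prop) ?_
  refine (ae_restrict_iff' (measurableSet_posOrth k)).2 (Filter.Eventually.of_forall fun y hy => ?_)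
  rw [Real.norm_eq_abs, abs_mul, Real.abs_exp]
  have h0 : 0 ≤ ∑ i, y i := Finset.sum_nonneg fun i _ => (hy i).le
  have : Real.exp (-2 * lam * u * ∑ i, y i) ≤ 1 := by
    rw [Real.exp_le_one_iff]
    have : 0 ≤ 2 * lam * u * ∑ i, y i := by positivity
    linarith
  exact mul_le_of_le_one_right (abs_nonneg _) this

lemma inn_abs_le {k : ℕ} {g : (Fin k → ℝ) → ℝ} (hg : Measurable g)
    (hint : IntegrableOn (fun y : Fin k → ℝ => |g y * g (fun i => 1 + y i)|) (posOrth k))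
    {lam u : ℝ} (hlam : 0 < lam) (hu : 0 < u) :
    |inn g lam u| ≤ ∫ y in posOrth k, |g y * g (fun i => 1 + y i)| := by
  refine (abs_integral_le_integral_abs).trans ?_
  refine setIntegral_mono_on (inn_integrable hg hint hlam hu).abs hint
    (measurableSet_posOrth k) fun y hy => ?_
  rw [abs_mul, Real.abs_exp]
  have h0 : 0 ≤ ∑ i, y i := Finset.sum_nonneg fun i _ => (hy i).le
  have : Real.exp (-2 * lam * u * ∑ i, y i) ≤ 1 := by
    rw [Real.exp_le_one_iff]
    have : 0 ≤ 2 * lam * u * ∑ i, y i := by positivity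
    linarith
  exact mul_le_of_le_one_right (abs_nonneg _) this

lemma cov_abs_le {k : ℕ} {g : (Fin k → ℝ) → ℝ} (hg : Measurable g) (α : ℝ)
    (hint : IntegrableOn (fun y : Fin k → ℝ => |g y * g (fun i => 1 + y i)|) (posOrth k))
    {lam u : ℝ} (hlam : 0 < lam) (hu : 0 < u) :
    |cov g α lam u| ≤ u ^ (2 * α + (k : ℝ)) *
      ∫ y in posOrth k, |g y * g (fun i => 1 + y i)| := by
  unfold cov
  rw [abs_mul, abs_mul, Real.abs_exp, abs_of_nonneg (Real.rpow_nonneg hu.le _)]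
  have h1 : Real.exp (-lam * (k : ℝ) * u) ≤ 1 := by
    rw [Real.exp_le_one_iff]
    have : 0 ≤ lam * k * u := by positivity
    linarith
  refine mul_le_mul ?_ (inn_abs_le hg hint hlam hu) (abs_nonneg _) (Real.rpow_nonneg hu.le _)
  exact mul_le_of_le_one_right (Real.rpow_nonneg hu.le _) h1

lemma cov_measurable {k : ℕ} {g : (Fin k → ℝ) → ℝ} (hg : Measurable g) (α lam : ℝ) :
    Measurable (cov g α lam) := by
  have hm := meas_shift hg
  have : Measurable (inn g lam) := by
    unfold inn
    refine (StronglyMeasurable.integral_prod_right (ν := volume.restrict (posOrth k))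
      (f := fun (u : ℝ) (y : Fin k → ℝ) =>
      g y * g (fun i => 1 + y i) * Real.exp (-2 * lam * u * ∑ i, y i)) ?_).measurable
    refine Measurable.stronglyMeasurable ?_
    have h1 : Measurable (fun p : ℝ × (Fin k → ℝ) => g p.2) := hg.comp measurable_snd
    have h2 : Measurable (fun p : ℝ × (Fin k → ℝ) => g (fun i => 1 + p.2 i)) :=
      hm.comp measurable_snd
    simp only [Function.uncurry_def]
    fun_prop
  unfold cov
  fun_prop

lemma phi_scale {k : ℕ} {g : (Fin k → ℝ) → ℝ} {α : ℝ}
    (hhom : ∀ c : ℝ, 0 < c → ∀ x : Fin k → ℝ, (∀ i, 0 < x i) →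
      g (c • x) = c ^ α * g x) (lam : ℝ) {u : ℝ} (hu : 0 < u) (w : Fin k → ℝ) :
    phi g lam (u • w) * phi g lam ((fun _ => u) + u • w) =
      (u ^ (2 * α) * Real.exp (-lam * k * u)) * (posOrth k).indicator
        (fun y => g y * g (fun i => 1 + y i) * Real.exp (-2 * lam * u * ∑ i, y i)) w := by
  by_cases hw : w ∈ posOrth k
  · have h1 : u • w ∈ posOrth k := fun i => by simpa using mul_pos hu (hw i)
    have e : (fun _ => u) + u • w = u • (fun i => 1 + w i) := by
      ext i; simp [mul_add]
    have hw1 : ∀ i, 0 < 1 + w i := fun i => by have := hw i; linarith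
    have h2 : (fun _ => u) + u • w ∈ posOrth k := by
      rw [e]; exact fun i => by simpa using mul_pos hu (hw1 i)
    simp only [phi, indicator_of_mem h1, indicator_of_mem h2, indicator_of_mem hw]
    rw [e, hhom u hu w hw, hhom u hu _ hw1]
    have e1 : ∑ i, (u • w) i = u * ∑ i, w i := by simp [Finset.mul_sum]
    have e2 : ∑ i, (u • (fun i => 1 + w i)) i = u * k + u * ∑ i, w i := by
      simp [Finset.mul_sum, mul_add, Finset.sum_add_distrib, mul_comm]
    rw [e1, e2]
    have e3 : u ^ (2 * α) = u ^ α * u ^ α := by rw [← Real.rpow_add hu]; ring_nf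
    have e4 : Real.exp (-lam * (u * ∑ i, w i)) * Real.exp (-lam * (u * k + u * ∑ i, w i)) =
        Real.exp (-lam * k * u) * Real.exp (-2 * lam * u * ∑ i, w i) := by
      rw [← Real.exp_add, ← Real.exp_add]; ring_nf
    rw [e3]
    linear_combination (u ^ α * u ^ α * g w * g (fun i => 1 + w i)) * e4
  · have h1 : u • w ∉ posOrth k := fun h => hw fun i => by
      have := h i
      simp only [Pi.smul_apply, smul_eq_mul] at this
      exact pos_of_mul_pos_right this hu.le
    simp only [phi, indicator_of_notMem h1, indicator_of_notMem hw]
    simp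

lemma key {k : ℕ} {g : (Fin k → ℝ) → ℝ} {α : ℝ} (hg : Measurable g)
    (hhom : ∀ c : ℝ, 0 < c → ∀ x : Fin k → ℝ, (∀ i, 0 < x i) →
      g (c • x) = c ^ α * g x)
    (hint : IntegrableOn (fun y : Fin k → ℝ => |g y * g (fun i => 1 + y i)|) (posOrth k))
    {lam : ℝ} (hlam : 0 < lam) {s r : ℝ} (hsr : s < r) :
    Integrable (fun x : Fin k → ℝ =>
      phi g lam (fun i => s - x i) * phi g lam (fun i => r - x i)) ∧
    ∫ x : Fin k → ℝ, phi g lam (fun i => s - x i) * phi g lam (fun i => r - x i) =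
      cov g α lam (r - s) := by
  set u := r - s with hu'
  have hu : 0 < u := sub_pos.2 hsr
  set Q : (Fin k → ℝ) → ℝ := fun y => phi g lam y * phi g lam ((fun _ => u) + y) with hQ
  have e : (fun x : Fin k → ℝ =>
      phi g lam (fun i => s - x i) * phi g lam (fun i => r - x i)) =
      fun x => Q ((fun _ => s) - x) := by
    ext x
    simp only [hQ]
    congr 2
    ext i; simp [hu']
  have hP : (fun w => Q (u • w)) = fun w => (u ^ (2 * α) * Real.exp (-lam * k * u)) *
      (posOrth k).indicator
        (fun y => g y * g (fun i => 1 + y i) * Real.exp (-2 * lam * u * ∑ i, y i)) w := by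
    ext w; exact phi_scale hhom lam hu w
  have hPi : Integrable (fun w => Q (u • w)) := by
    rw [hP]
    exact ((integrable_indicator_iff (measurableSet_posOrth k)).2
      (inn_integrable hg hint hlam hu)).const_mul _
  have hQi : Integrable Q := (integrable_comp_smul_iff volume Q hu.ne').1 hPi
  have hI := Measure.integral_comp_smul (volume : Measure (Fin k → ℝ)) Q u
  rw [hP, integral_const_mul, integral_indicator (measurableSet_posOrth k)] at hI
  rw [e]
  refine ⟨hQi.comp_sub_left _, ?_⟩
  rw [integral_sub_left_eq_self Q]
  simp only [Module.finrank_fin_fun, smul_eq_mul] at hI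
  have hk0 : 0 < u ^ k := pow_pos hu k
  rw [abs_of_pos (inv_pos.2 hk0), eq_inv_mul_iff_mul_eq₀ hk0.ne'] at hI
  rw [← hI, cov, inn, Real.rpow_add hu, Real.rpow_natCast]
  ring

lemma phi_abs {k : ℕ} (g : (Fin k → ℝ) → ℝ) (lam : ℝ) (y : Fin k → ℝ) :
    |phi g lam y| = phi (fun y => |g y|) lam y := by
  by_cases h : y ∈ posOrth k
  · simp [phi, indicator_of_mem h, abs_mul]
  · simp [phi, indicator_of_notMem h]

lemma key_abs {k : ℕ} {g : (Fin k → ℝ) → ℝ} {α : ℝ} (hg : Measurable g)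
    (hhom : ∀ c : ℝ, 0 < c → ∀ x : Fin k → ℝ, (∀ i, 0 < x i) →
      g (c • x) = c ^ α * g x)
    (hint : IntegrableOn (fun y : Fin k → ℝ => |g y * g (fun i => 1 + y i)|) (posOrth k))
    {lam : ℝ} (hlam : 0 < lam) {s r : ℝ} (hsr : s < r) :
    ∫ x : Fin k → ℝ, ‖phi g lam (fun i => s - x i) * phi g lam (fun i => r - x i)‖ ≤
      (r - s) ^ (2 * α + (k : ℝ)) * ∫ y in posOrth k, |g y * g (fun i => 1 + y i)| := by
  have hhom' : ∀ c : ℝ, 0 < c → ∀ x : Fin k → ℝ, (∀ i, 0 < x i) →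
      (fun y => |g y|) (c • x) = c ^ α * (fun y => |g y|) x := by
    intro c hc x hx
    simp only
    rw [hhom c hc x hx, abs_mul, abs_of_nonneg (Real.rpow_nonneg hc.le _)]
  have hg' : Measurable (fun y => |g y|) := by fun_prop
  have hint' : IntegrableOn (fun y : Fin k → ℝ => |(fun y => |g y|) y *
      (fun y => |g y|) (fun i => 1 + y i)|) (posOrth k) := by
    simpa [abs_mul] using hint
  have h := (key hg' hhom' hint' hlam hsr).2
  simp only [norm_mul, Real.norm_eq_abs, phi_abs]
  rw [h]
  refine (le_abs_self _).trans ((cov_abs_le hg' α hint' hlam (sub_pos.2 hsr)).trans (le_of_eq ?_))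
  simp [abs_mul]

/-- Truncated power. -/
noncomputable def pw (β t : ℝ) : ℝ → ℝ := (Ioc 0 t).indicator (fun u => u ^ β)

lemma pw_integrable {β : ℝ} (hβ : -1 < β) {t : ℝ} (ht : 0 ≤ t) : Integrable (pw β t) := by
  refine (integrable_indicator_iff measurableSet_Ioc).2 ?_
  exact (intervalIntegrable_iff_integrableOn_Ioc_of_le ht).1
    (intervalIntegral.intervalIntegrable_rpow' hβ)

lemma pw_conv {β : ℝ} (hβ : -1 < β) {t : ℝ} (ht : 0 ≤ t) :
    Integrable (fun p : ℝ × ℝ => pw β t (p.1 - p.2))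
      ((volume.restrict (Ioc 0 t)).prod (volume.restrict (Ioc 0 t))) := by
  have h1 : Integrable ((Ioc 0 t).indicator (fun _ : ℝ => (1 : ℝ))) :=
    (integrable_indicator_iff measurableSet_Ioc).2 (by simp)
  have h := h1.convolution_integrand (ContinuousLinearMap.mul ℝ ℝ) (pw_integrable hβ ht)
  rw [Measure.prod_restrict]
  refine (h.integrableOn (s := Ioc 0 t ×ˢ Ioc 0 t)).congr_fun ?_
    (measurableSet_Ioc.prod measurableSet_Ioc)
  rintro ⟨a, b⟩ ⟨_, hb⟩
  simp only at hb
  simp [indicator_of_mem hb]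

lemma ae_ne (t : ℝ) : ∀ᵐ p ∂((volume.restrict (Ioc 0 t)).prod (volume.restrict (Ioc 0 t)) :
    Measure (ℝ × ℝ)), p.1 ≠ p.2 := by
  rw [ae_iff]
  have hms : MeasurableSet {p : ℝ × ℝ | ¬ p.1 ≠ p.2} := by
    simpa using measurableSet_eq_fun measurable_fst measurable_snd
  rw [Measure.measure_prod_null hms]
  refine Filter.Eventually.of_forall fun x => ?_
  have : Prod.mk x ⁻¹' {p : ℝ × ℝ | ¬ p.1 ≠ p.2} = {x} := by
    ext y; simp [eq_comm]
  simp only [this]; simp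

/-- Three-variable integrand. -/
noncomputable def FF {k : ℕ} (g : (Fin k → ℝ) → ℝ) (lam : ℝ) (q : (ℝ × ℝ) × (Fin k → ℝ)) : ℝ :=
  phi g lam (fun i => q.1.1 - q.2 i) * phi g lam (fun i => q.1.2 - q.2 i)

lemma FF_measurable {k : ℕ} {g : (Fin k → ℝ) → ℝ} (hg : Measurable g) (lam : ℝ) :
    Measurable (FF g lam) := by
  unfold FF
  have h := measurable_phi hg lam
  exact (h.comp (measurable_pi_lambda _ fun i => by fun_prop)).mul
    (h.comp (measurable_pi_lambda _ fun i => by fun_prop))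

lemma key_FF {k : ℕ} {g : (Fin k → ℝ) → ℝ} {α : ℝ} (hg : Measurable g)
    (hhom : ∀ c : ℝ, 0 < c → ∀ x : Fin k → ℝ, (∀ i, 0 < x i) →
      g (c • x) = c ^ α * g x)
    (hint : IntegrableOn (fun y : Fin k → ℝ => |g y * g (fun i => 1 + y i)|) (posOrth k))
    {lam : ℝ} (hlam : 0 < lam) {p : ℝ × ℝ} (hsr : p.1 ≠ p.2) :
    Integrable (fun x => FF g lam (p, x)) ∧
    ∫ x, FF g lam (p, x) = cov g α lam |p.1 - p.2| ∧
    ∫ x, ‖FF g lam (p, x)‖ ≤ |p.1 - p.2| ^ (2 * α + (k : ℝ)) *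
       ∫ y in posOrth k, |g y * g (fun i => 1 + y i)| := by
  unfold FF
  rcases lt_or_gt_of_ne hsr with h | h
  · rw [abs_sub_comm, abs_of_pos (sub_pos.2 h)]
    exact ⟨(key hg hhom hint hlam h).1, (key hg hhom hint hlam h).2,
      key_abs hg hhom hint hlam h⟩
  · rw [abs_of_pos (sub_pos.2 h)]
    have hc : (fun x : Fin k → ℝ => phi g lam (fun i => p.1 - x i) *
      phi g lam (fun i => p.2 - x i)) = fun x : Fin k → ℝ => phi g lam (fun i => p.2 - x i) *
      phi g lam (fun i => p.1 - x i) := by ext x; ring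
    have h1 := key hg hhom hint hlam h
    have h2 := key_abs hg hhom hint hlam h
    rw [← hc] at h1
    refine ⟨h1.1, h1.2, ?_⟩
    refine le_trans (le_of_eq ?_) h2
    congr 1; ext x; rw [mul_comm]

lemma FF_integrable {k : ℕ} {g : (Fin k → ℝ) → ℝ} {α : ℝ} (hg : Measurable g)
    (hα : -1 < 2 * α + (k : ℝ))
    (hhom : ∀ c : ℝ, 0 < c → ∀ x : Fin k → ℝ, (∀ i, 0 < x i) →
      g (c • x) = c ^ α * g x)
    (hint : IntegrableOn (fun y : Fin k → ℝ => |g y * g (fun i => 1 + y i)|) (posOrth k))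
    {lam : ℝ} (hlam : 0 < lam) {t : ℝ} (ht : 0 ≤ t) :
    Integrable (FF g lam)
      (((volume.restrict (Ioc 0 t)).prod (volume.restrict (Ioc 0 t))).prod volume) := by
  have hm := FF_measurable hg lam
  rw [integrable_prod_iff hm.aestronglyMeasurable]
  constructor
  · filter_upwards [ae_ne t] with p hp
    exact (key_FF hg hhom hint hlam hp).1
  · have hb := ((pw_conv hα ht).add (pw_conv hα ht).swap).mul_const
      (∫ y in posOrth k, |g y * g (fun i => 1 + y i)|)
    refine hb.mono' ?_ ?_
    · exact (hm.norm.stronglyMeasurable.integral_prod_right').aestronglyMeasurable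
    · have hmem : ∀ᵐ p ∂((volume.restrict (Ioc 0 t)).prod (volume.restrict (Ioc 0 t)) :
          Measure (ℝ × ℝ)), p ∈ Ioc 0 t ×ˢ Ioc 0 t := by
        rw [Measure.prod_restrict]
        exact ae_restrict_mem (measurableSet_Ioc.prod measurableSet_Ioc)
      filter_upwards [ae_ne t, hmem] with p hp hpm
      obtain ⟨⟨ha, hb⟩, ⟨hc, hd⟩⟩ := hpm
      rw [Real.norm_of_nonneg (integral_nonneg fun _ => norm_nonneg _)]
      refine (key_FF hg hhom hint hlam hp).2.2.trans (le_of_eq ?_)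
      congr 1
      simp only [Pi.add_apply, Function.comp, Prod.swap, pw]
      rcases lt_or_gt_of_ne hp with h | h
      · have m1 : p.1 - p.2 ∉ Ioc 0 t := fun hh => by linarith [hh.1]
        have m2 : p.2 - p.1 ∈ Ioc 0 t := ⟨by linarith, by linarith⟩
        rw [indicator_of_notMem m1, indicator_of_mem m2, abs_sub_comm, abs_of_pos (sub_pos.2 h),
          zero_add]
      · have m1 : p.2 - p.1 ∉ Ioc 0 t := fun hh => by linarith [hh.1]
        have m2 : p.1 - p.2 ∈ Ioc 0 t := ⟨by linarith, by linarith⟩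
        rw [indicator_of_mem m2, indicator_of_notMem m1, abs_of_pos (sub_pos.2 h),
          add_zero]

lemma kernel_sq {k : ℕ} (g : (Fin k → ℝ) → ℝ) (lam t : ℝ) (x : Fin k → ℝ) :
    tghKernel g lam t x ^ 2 = ∫ p, FF g lam (p, x)
      ∂((volume.restrict (Ioc 0 t)).prod (volume.restrict (Ioc 0 t))) := by
  have h : tghKernel g lam t x = ∫ s in Ioc 0 t, phi g lam (fun i => s - x i) := by
    unfold tghKernel
    congr 1
    ext s
    by_cases hs : ∀ i, x i < s
    · rw [indicator_of_mem (show s ∈ {s' : ℝ | ∀ i, x i < s'} from hs), phi, indicator_of_mem]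
      exact fun i => sub_pos.2 (hs i)
    · rw [indicator_of_notMem (show s ∉ {s' : ℝ | ∀ i, x i < s'} from hs), phi,
        indicator_of_notMem]
      exact fun hh => hs fun i => sub_pos.1 (hh i)
  rw [h, sq]
  exact (integral_prod_mul (fun s : ℝ => phi g lam (fun i => s - x i))
    (fun s : ℝ => phi g lam (fun i => s - x i))).symm

lemma inner_shift (c : ℝ → ℝ) {t s : ℝ} (hs : s ∈ Ioc 0 t) :
    ∫ r in Ioc 0 t, (Ioi s).indicator (fun r => c (r - s)) r = ∫ u in Ioc 0 (t - s), c u := by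
  rw [setIntegral_indicator measurableSet_Ioi]
  have : Ioc 0 t ∩ Ioi s = Ioc s t := by
    ext r; simp only [mem_inter_iff, mem_Ioc, mem_Ioi]
    constructor
    · rintro ⟨⟨_, h⟩, h'⟩; exact ⟨h', h⟩
    · rintro ⟨h, h'⟩; exact ⟨⟨hs.1.trans h, h'⟩, h⟩
  rw [this, ← intervalIntegral.integral_of_le hs.2,
    ← intervalIntegral.integral_of_le (sub_nonneg.2 hs.2),
    intervalIntegral.integral_comp_sub_right c s, sub_self]

lemma sym_split (c : ℝ → ℝ) {t : ℝ}
    (hc : Integrable (fun p : ℝ × ℝ => c |p.1 - p.2|)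
      ((volume.restrict (Ioc 0 t)).prod (volume.restrict (Ioc 0 t)))) :
    ∫ p : ℝ × ℝ, c |p.1 - p.2| ∂((volume.restrict (Ioc 0 t)).prod (volume.restrict (Ioc 0 t))) =
      2 * ∫ s in Ioc 0 t, ∫ u in Ioc 0 (t - s), c u := by
  set μ := (volume.restrict (Ioc (0 : ℝ) t)).prod (volume.restrict (Ioc (0 : ℝ) t)) with hμ
  have hT : MeasurableSet {p : ℝ × ℝ | p.1 < p.2} := measurableSet_lt measurable_fst measurable_snd
  set f : ℝ × ℝ → ℝ := {p : ℝ × ℝ | p.1 < p.2}.indicator (fun p => c |p.1 - p.2|) with hf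
  have hfi : Integrable f μ := hc.indicator hT
  have h1 : ∫ p : ℝ × ℝ, c |p.1 - p.2| ∂μ = ∫ p, (f p + f p.swap) ∂μ := by
    refine integral_congr_ae ?_
    filter_upwards [ae_ne t] with p hp
    rcases lt_or_gt_of_ne hp with h | h
    · simp [hf, indicator, h, h.le, not_lt.2 h.le]
    · simp [hf, indicator, h, h.le, not_lt.2 h.le, abs_sub_comm]
  have hsw : ∫ p, f p.swap ∂μ = ∫ p, f p ∂μ := integral_prod_swap f
  have hfs : Integrable (fun p : ℝ × ℝ => f p.swap) μ := hfi.swap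
  rw [h1, integral_add hfi hfs, hsw, ← two_mul, integral_prod f hfi]
  congr 1
  refine setIntegral_congr_fun measurableSet_Ioc fun s hs => ?_
  rw [← inner_shift c hs]
  congr 1
  ext r
  by_cases h : s < r
  · rw [indicator_of_mem (show r ∈ Ioi s from h), hf,
      indicator_of_mem (show (s, r) ∈ {p : ℝ × ℝ | p.1 < p.2} from h)]
    simp only
    rw [abs_sub_comm, abs_of_pos (sub_pos.2 h)]
  · rw [indicator_of_notMem (show r ∉ Ioi s from h), hf,
      indicator_of_notMem (show (s, r) ∉ {p : ℝ × ℝ | p.1 < p.2} from h)]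

theorem stmt1 {k : ℕ} (hk : 1 ≤ k) (α : ℝ)
    (hα₁ : -((k : ℝ) + 1) / 2 < α) (hα₂ : α < -(k : ℝ) / 2)
    (g : (Fin k → ℝ) → ℝ) (hg : Measurable g)
    (hhom : ∀ c : ℝ, 0 < c → ∀ x : Fin k → ℝ, (∀ i, 0 < x i) →
      g (c • x) = c ^ α * g x)
    (hint : IntegrableOn (fun y : Fin k → ℝ => |g y * g (fun i => 1 + y i)|)
      {y : Fin k → ℝ | ∀ i, 0 < y i})
    (lam : ℝ) (hlam : 0 < lam) (t : ℝ) (ht : 0 ≤ t) :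
    -- absolute convergence of all integrals involved
    Integrable (fun x : Fin k → ℝ => (tghKernel g lam t x) ^ 2) ∧
    (∀ u : ℝ, 0 < u →
      IntegrableOn
        (fun y : Fin k → ℝ => g y * g (fun i => 1 + y i) *
          Real.exp (-2 * lam * u * ∑ i, y i))
        {y : Fin k → ℝ | ∀ i, 0 < y i}) ∧
    IntegrableOn
      (fun p : ℝ × ℝ =>
        p.2 ^ (2 * α + (k : ℝ)) * Real.exp (-lam * (k : ℝ) * p.2) *
          ∫ y in {y : Fin k → ℝ | ∀ i, 0 < y i},
            g y * g (fun i => 1 + y i) * Real.exp (-2 * lam * p.2 * ∑ i, y i))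
      {p : ℝ × ℝ | p.1 ∈ Set.Ioc (0 : ℝ) t ∧ p.2 ∈ Set.Ioc (0 : ℝ) (t - p.1)} ∧
    -- the L² norm identity
    (∫ x : Fin k → ℝ, (tghKernel g lam t x) ^ 2) =
      2 * ∫ s in Set.Ioc (0 : ℝ) t, ∫ u in Set.Ioc (0 : ℝ) (t - s),
        u ^ (2 * α + (k : ℝ)) * Real.exp (-lam * (k : ℝ) * u) *
          ∫ y in {y : Fin k → ℝ | ∀ i, 0 < y i},
            g y * g (fun i => 1 + y i) * Real.exp (-2 * lam * u * ∑ i, y i) := by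
  have hβ : -1 < 2 * α + (k : ℝ) := by linarith
  have hint' : IntegrableOn (fun y : Fin k → ℝ => |g y * g (fun i => 1 + y i)|) (posOrth k) := hint
  have hF := FF_integrable hg hβ hhom hint' hlam ht
  refine ⟨?_, fun u hu => inn_integrable hg hint' hlam hu, ?_, ?_⟩
  · simp only [kernel_sq]
    exact hF.swap.integral_prod_left
  · change IntegrableOn (fun p : ℝ × ℝ => cov g α lam p.2) _
    have hb : Integrable (fun p : ℝ × ℝ => (Ioc 0 t).indicator (fun _ : ℝ => (1 : ℝ)) p.1 *
        pw (2 * α + k) t p.2) := by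
      refine Integrable.mul_prod ?_ (pw_integrable hβ ht)
      exact (integrable_indicator_iff measurableSet_Ioc).2 (by simp)
    have hms : MeasurableSet
        {p : ℝ × ℝ | p.1 ∈ Set.Ioc (0 : ℝ) t ∧ p.2 ∈ Set.Ioc (0 : ℝ) (t - p.1)} := by
      simp only [mem_Ioc]
      measurability
    refine Integrable.mono' ((hb.mul_const
      (∫ y in posOrth k, |g y * g (fun i => 1 + y i)|)).integrableOn)
      ((cov_measurable hg α lam).comp measurable_snd).aestronglyMeasurable ?_
    refine (ae_restrict_iff' hms).2 (Filter.Eventually.of_forall ?_)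
    rintro ⟨s, u⟩ ⟨hs, hu⟩
    simp only at hs hu
    have hu2 : u ∈ Ioc 0 t := ⟨hu.1, by linarith [hu.2, hs.1]⟩
    simp only [indicator_of_mem hs, pw, indicator_of_mem hu2, one_mul]
    exact cov_abs_le hg α hint' hlam hu.1
  · change _ = 2 * ∫ s in Ioc 0 t, ∫ u in Ioc 0 (t - s), cov g α lam u
    have hae : (fun p => ∫ x, FF g lam (p, x)) =ᵐ[(volume.restrict (Ioc 0 t)).prod
        (volume.restrict (Ioc 0 t))] fun p => cov g α lam |p.1 - p.2| := by
      filter_upwards [ae_ne t] with p hp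
      exact (key_FF hg hhom hint' hlam hp).2.1
    rw [← sym_split _ (hF.integral_prod_left.congr hae), ← integral_congr_ae hae]
    simp only [kernel_sq]
    rw [← integral_prod _ hF, integral_prod_symm _ hF]
end

section
/- Let k ≥ 1, α ∈ (−(k+1)/2, −k/2), and let g : (0,∞)^k → ℝ be measurable with g(c x) = c^α g(x) for all c > 0 and A := ∫_{(0,∞)^k} |g(y) g(1+y)| dy < ∞. Set H = α + 1 + k/2 ∈ (1/2, 1). Then for every λ > 0 there is a constant C = (A / ((α + (k+1)/2)(2α + k + 2)))^{1/2} such that for all s, t ≥ 0, ‖h_t^λ − h_s^λ‖_{L²(ℝ^k)} ≤ C |t − s|^H. -/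
open MeasureTheory Real Set

noncomputable def tghF {k : ℕ} (g : (Fin k → ℝ) → ℝ) (u : ℝ) (x : Fin k → ℝ) : ENNReal :=
  Set.indicator {x : Fin k → ℝ | ∀ i, x i < u} (fun x => ‖g (fun i => u - x i)‖ₑ) x

lemma tghF_meas {k : ℕ} (g : (Fin k → ℝ) → ℝ) (hg : Measurable g) :
    Measurable (fun p : ℝ × (Fin k → ℝ) => tghF g p.1 p.2) := by
  have h1 : MeasurableSet {p : ℝ × (Fin k → ℝ) | ∀ i, p.2 i < p.1} := by
    have : {p : ℝ × (Fin k → ℝ) | ∀ i, p.2 i < p.1} = ⋂ i, {p | p.2 i < p.1} := by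
      ext; simp
    rw [this]
    exact MeasurableSet.iInter fun i => measurableSet_lt (by fun_prop) (by fun_prop)
  have h2 : Measurable (fun p : ℝ × (Fin k → ℝ) => ‖g (fun i => p.1 - p.2 i)‖ₑ) :=
    (hg.comp (by fun_prop)).enorm
  exact h2.indicator h1

lemma tgh_pair {k : ℕ} (α : ℝ) (g : (Fin k → ℝ) → ℝ) (hg : Measurable g)
    (hhom : ∀ c : ℝ, 0 < c → ∀ x : Fin k → ℝ, (∀ i, 0 < x i) →
      g (c • x) = c ^ α * g x) (u v : ℝ) (huv : u < v) :
    ∫⁻ x, tghF g u x * tghF g v x =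
      ENNReal.ofReal ((v - u) ^ (2 * α + k)) *
        ∫⁻ y in {y : Fin k → ℝ | ∀ i, 0 < y i}, ‖|g y * g (fun i => 1 + y i)|‖ₑ := by
  have hc : 0 < v - u := sub_pos.2 huv
  set c := v - u with hcdef
  have hm : Measurable (fun x => tghF g u x * tghF g v x) :=
    ((tghF_meas g hg).comp (measurable_prodMk_left (x := u))).mul
      ((tghF_meas g hg).comp (measurable_prodMk_left (x := v)))
  have hP : MeasurableSet {y : Fin k → ℝ | ∀ i, 0 < y i} := by
    have : {y : Fin k → ℝ | ∀ i, 0 < y i} = ⋂ i, {y | 0 < y i} := by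
      ext; simp
    rw [this]
    exact MeasurableSet.iInter fun i => measurableSet_lt (by fun_prop) (by fun_prop)
  rw [← lintegral_sub_left_eq_self (fun x => tghF g u x * tghF g v x) (fun _ => u)]
  have key : ∀ y : Fin k → ℝ, tghF g u ((fun _ => u) - c • y) * tghF g v ((fun _ => u) - c • y)
      = ENNReal.ofReal (c ^ (2 * α)) * ({y : Fin k → ℝ | ∀ i, 0 < y i}.indicator
        (fun y => ‖|g y * g (fun i => 1 + y i)|‖ₑ) y) := by
    intro y
    by_cases hy : ∀ i, 0 < y i
    · have h1 : ((fun _ => u) - c • y) ∈ {x : Fin k → ℝ | ∀ i, x i < u} := by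
        intro i
        have := mul_pos hc (hy i)
        simp; linarith
      have h2 : ((fun _ => u) - c • y) ∈ {x : Fin k → ℝ | ∀ i, x i < v} := by
        intro i
        have := h1 i
        linarith
      have h3 : y ∈ {y : Fin k → ℝ | ∀ i, 0 < y i} := hy
      rw [tghF, tghF, indicator_of_mem h1, indicator_of_mem h2, indicator_of_mem h3]
      have e1 : (fun i => u - ((fun _ => u) - c • y : Fin k → ℝ) i) = c • y := by
        ext i; simp
      have e2 : (fun i => v - ((fun _ => u) - c • y : Fin k → ℝ) i) = c • (fun i => 1 + y i) := by
        ext i; simp [hcdef]; ring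
      rw [e1, e2, hhom c hc y hy, hhom c hc _ (fun i => by linarith [hy i])]
      rw [← enorm_mul, enorm_abs, ← Real.enorm_of_nonneg (by positivity), ← enorm_mul]
      congr 1
      rw [two_mul, Real.rpow_add hc]; ring
    · have h1 : ((fun _ => u) - c • y) ∉ {x : Fin k → ℝ | ∀ i, x i < u} := by
        intro h
        apply hy
        intro i
        have := h i
        simp at this
        exact (pos_iff_pos_of_mul_pos this).1 hc
      have h3 : y ∉ {y : Fin k → ℝ | ∀ i, 0 < y i} := hy
      rw [tghF, indicator_of_notMem h1, indicator_of_notMem h3]; simp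
  have hm2 : Measurable (fun x => tghF g u ((fun _ => u) - x) * tghF g v ((fun _ => u) - x)) :=
    hm.comp (by fun_prop)
  have hmap := Measure.map_addHaar_smul (volume : Measure (Fin k → ℝ)) hc.ne'
  have hlin := lintegral_map (μ := (volume : Measure (Fin k → ℝ))) hm2
    (measurable_const_smul c)
  rw [hmap, lintegral_smul_measure] at hlin
  simp_rw [key] at hlin
  rw [lintegral_const_mul' _ _ ENNReal.ofReal_ne_top, lintegral_indicator hP] at hlin
  have hck : 0 < c ^ k := pow_pos hc k
  rw [Module.finrank_fin_fun, abs_of_pos (by positivity), smul_eq_mul] at hlin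
  have e5 : ENNReal.ofReal (c ^ (2 * α + k))
      = ENNReal.ofReal (c ^ k) * ENNReal.ofReal (c ^ (2 * α)) := by
    rw [← ENNReal.ofReal_mul hck.le, Real.rpow_add hc, Real.rpow_natCast, mul_comm]
  rw [e5, mul_assoc, ← hlin, ← mul_assoc, ← ENNReal.ofReal_mul hck.le, mul_inv_cancel₀ hck.ne',
    ENNReal.ofReal_one, one_mul]

lemma tgh_l1 (γ c : ℝ) (hγ : -1 < γ) (hc : 0 ≤ c) :
    ∫⁻ v in Ioc 0 c, ENNReal.ofReal (v ^ γ) = ENNReal.ofReal (c ^ (γ + 1) / (γ + 1)) := by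
  rw [← ofReal_integral_eq_lintegral_ofReal, ← intervalIntegral.integral_of_le hc,
    integral_rpow (Or.inl hγ), Real.zero_rpow (by linarith), sub_zero]
  · exact (intervalIntegrable_iff_integrableOn_Ioc_of_le hc).1
      (intervalIntegral.intervalIntegrable_rpow' hγ)
  · exact (ae_restrict_mem measurableSet_Ioc).mono fun x hx => Real.rpow_nonneg hx.1.le _

lemma tgh_l2 (γ a b : ℝ) (hγ : -1 < γ) (hab : a ≤ b) :
    ∫⁻ v in Ioc a b, ENNReal.ofReal ((v - a) ^ γ)
      = ENNReal.ofReal ((b - a) ^ (γ + 1) / (γ + 1)) := by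
  rw [← tgh_l1 γ (b - a) hγ (by linarith), ← lintegral_indicator measurableSet_Ioc,
    ← lintegral_indicator measurableSet_Ioc,
    ← lintegral_sub_right_eq_self ((Ioc 0 (b-a)).indicator _) a]
  congr 1
  ext v
  simp only [indicator, mem_Ioc, sub_pos, sub_le_sub_iff_right]

lemma tgh_l3 (γ a b : ℝ) (hγ : -1 < γ) (hab : a ≤ b) :
    ∫⁻ v in Ioc a b, ENNReal.ofReal ((b - v) ^ γ)
      = ENNReal.ofReal ((b - a) ^ (γ + 1) / (γ + 1)) := by
  rw [← tgh_l1 γ (b - a) hγ (by linarith), ← restrict_Ico_eq_restrict_Ioc, ← lintegral_indicator measurableSet_Ico,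
    ← lintegral_indicator measurableSet_Ioc,
    ← lintegral_sub_left_eq_self ((Ioc 0 (b-a)).indicator _) b]
  congr 1
  ext v
  simp only [indicator, mem_Ioc, mem_Ico, sub_pos, sub_le_sub_iff_left, and_comm]

lemma tgh_sq {k : ℕ} (α : ℝ)
    (hα₁ : -((k : ℝ) + 1) / 2 < α)
    (g : (Fin k → ℝ) → ℝ) (hg : Measurable g)
    (hhom : ∀ c : ℝ, 0 < c → ∀ x : Fin k → ℝ, (∀ i, 0 < x i) →
      g (c • x) = c ^ α * g x)
    (hint : IntegrableOn (fun y : Fin k → ℝ => |g y * g (fun i => 1 + y i)|)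
      {y : Fin k → ℝ | ∀ i, 0 < y i}) (a b : ℝ) (hab : a ≤ b) :
    ∫⁻ x, (∫⁻ u in Ioc a b, tghF g u x) ^ 2 ≤
      ENNReal.ofReal ((∫ y in {y : Fin k → ℝ | ∀ i, 0 < y i},
            |g y * g (fun i => 1 + y i)|) /
          ((α + ((k : ℝ) + 1) / 2) * (2 * α + (k : ℝ) + 2)) * (b - a) ^ (2 * α + k + 2)) := by
  have hF := tghF_meas g hg
  have hFx : ∀ x, Measurable (fun u => tghF g u x) := fun x =>
    hF.comp (measurable_prodMk_right (y := x))
  set A := ∫ y in {y : Fin k → ℝ | ∀ i, 0 < y i}, |g y * g (fun i => 1 + y i)| with hA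
  have hA0 : 0 ≤ A := integral_nonneg fun _ => abs_nonneg _
  have hA' : ∫⁻ y in {y : Fin k → ℝ | ∀ i, 0 < y i}, ‖|g y * g (fun i => 1 + y i)|‖ₑ
      = ENNReal.ofReal A := by
    rw [hA, ofReal_integral_eq_lintegral_ofReal hint (ae_of_all _ fun _ => abs_nonneg _)]
    exact lintegral_congr fun _ => Real.enorm_of_nonneg (abs_nonneg _)
  set β := 2 * α + k with hβ
  have hβ1 : -1 < β := by rw [hβ]; linarith
  have e1 : ∀ x, (∫⁻ u in Ioc a b, tghF g u x) ^ 2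
      = ∫⁻ u in Ioc a b, ∫⁻ v in Ioc a b, tghF g u x * tghF g v x := by
    intro x
    rw [sq, ← lintegral_mul_const _ (hFx x)]
    refine lintegral_congr fun u => ?_
    rw [lintegral_const_mul _ (hFx x)]
  simp_rw [e1]
  have hm3 : Measurable (fun p : ((Fin k → ℝ) × ℝ) × ℝ => tghF g p.1.2 p.1.1 * tghF g p.2 p.1.1) :=
    (hF.comp (f := fun p : ((Fin k → ℝ) × ℝ) × ℝ => (p.1.2, p.1.1)) (by fun_prop)).mul
      (hF.comp (f := fun p : ((Fin k → ℝ) × ℝ) × ℝ => (p.2, p.1.1)) (by fun_prop))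
  rw [lintegral_lintegral_swap (by exact hm3.lintegral_prod_right'.aemeasurable)]
  have e2 : ∀ u, ∫⁻ x, ∫⁻ v in Ioc a b, tghF g u x * tghF g v x
      = ∫⁻ v in Ioc a b, ∫⁻ x, tghF g u x * tghF g v x := by
    intro u
    rw [lintegral_lintegral_swap]
    exact (hm3.comp (f := fun p : (Fin k → ℝ) × ℝ => ((p.1, u), p.2)) (by fun_prop)).aemeasurable
  simp_rw [e2]
  have hin : ∀ u ∈ Ioc a b, ∫⁻ v in Ioc a b, ∫⁻ x, tghF g u x * tghF g v x ≤
      ENNReal.ofReal A * (ENNReal.ofReal ((u - a) ^ (β + 1) / (β + 1)) +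
        ENNReal.ofReal ((b - u) ^ (β + 1) / (β + 1))) := by
    intro u hu
    rw [← Ioc_union_Ioc_eq_Ioc hu.1.le hu.2]
    refine (lintegral_union_le _ _ _).trans ?_
    rw [mul_add]
    refine add_le_add ?_ ?_
    · rw [← tgh_l3 β a u hβ1 hu.1.le, ← lintegral_const_mul _ (by fun_prop),
        ← restrict_Ioo_eq_restrict_Ioc]
      refine setLIntegral_mono' measurableSet_Ioo fun v hv => ?_
      simp_rw [mul_comm (tghF g u _)]
      rw [tgh_pair α g hg hhom v u hv.2, hA', mul_comm]
    · rw [← tgh_l2 β u b hβ1 hu.2, ← lintegral_const_mul _ (by fun_prop)]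
      refine setLIntegral_mono' measurableSet_Ioc fun v hv => ?_
      rw [tgh_pair α g hg hhom u v hv.1, hA', mul_comm]
  refine (setLIntegral_mono' measurableSet_Ioc hin).trans ?_
  rw [lintegral_const_mul _ (by fun_prop), lintegral_add_left (by fun_prop)]
  have hp : 0 < β + 1 := by linarith
  simp_rw [div_eq_mul_inv _ (β + 1)]
  have hq : 0 ≤ (β + 1)⁻¹ := by positivity
  simp_rw [ENNReal.ofReal_mul' hq]
  rw [lintegral_mul_const _ (by fun_prop), lintegral_mul_const _ (by fun_prop),
    tgh_l2 _ _ _ (by linarith) hab, tgh_l3 _ _ _ (by linarith) hab]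
  have hba : 0 ≤ b - a := by linarith
  have hp2 : 0 < β + 1 + 1 := by linarith
  rw [← ENNReal.ofReal_mul (by positivity), ← ENNReal.ofReal_add (by positivity) (by positivity),
    ← ENNReal.ofReal_mul hA0]
  apply ENNReal.ofReal_le_ofReal
  apply le_of_eq
  have e3 : α + ((k : ℝ) + 1) / 2 = (β + 1) / 2 := by rw [hβ]; ring
  have e4 : β + 2 = β + 1 + 1 := by ring
  rw [e3, e4]
  field_simp
  ring

lemma tgh_kernel_bound {k : ℕ} (g : (Fin k → ℝ) → ℝ) (lam : ℝ) (hlam : 0 < lam) (u : ℝ)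
    (x : Fin k → ℝ) :
    ‖Set.indicator {s' : ℝ | ∀ i, x i < s'}
      (fun s' => g (fun i => s' - x i) * Real.exp (-lam * ∑ i, (s' - x i))) u‖ₑ ≤ tghF g u x := by
  by_cases h : ∀ i, x i < u
  · rw [tghF, indicator_of_mem (by exact h), indicator_of_mem (by exact h), enorm_mul]
    refine mul_le_of_le_one_right' ?_
    rw [Real.enorm_of_nonneg (Real.exp_pos _).le, ENNReal.ofReal_le_one, Real.exp_le_one_iff]
    have : 0 ≤ ∑ i, (u - x i) := Finset.sum_nonneg fun i _ => by linarith [h i]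
    nlinarith
  · rw [indicator_of_notMem (by exact h)]; simp

theorem tgh_main {k : ℕ} (α : ℝ)
    (hα₁ : -((k : ℝ) + 1) / 2 < α)
    (g : (Fin k → ℝ) → ℝ) (hg : Measurable g)
    (hhom : ∀ c : ℝ, 0 < c → ∀ x : Fin k → ℝ, (∀ i, 0 < x i) →
      g (c • x) = c ^ α * g x)
    (hint : IntegrableOn (fun y : Fin k → ℝ => |g y * g (fun i => 1 + y i)|)
      {y : Fin k → ℝ | ∀ i, 0 < y i})
    (lam : ℝ) (hlam : 0 < lam) (s t : ℝ) (hs : 0 ≤ s) (hst : s ≤ t) :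
    eLpNorm (fun x : Fin k → ℝ => tghKernel g lam t x - tghKernel g lam s x) 2
        (volume : Measure (Fin k → ℝ)) ≤
      ENNReal.ofReal
        (Real.sqrt ((∫ y in {y : Fin k → ℝ | ∀ i, 0 < y i},
            |g y * g (fun i => 1 + y i)|) /
          ((α + ((k : ℝ) + 1) / 2) * (2 * α + (k : ℝ) + 2))) *
          |t - s| ^ (α + 1 + (k : ℝ) / 2)) := by
  have hF := tghF_meas g hg
  have hfin : ∀ᵐ x : Fin k → ℝ, (∫⁻ u in Ioc 0 t, tghF g u x) ^ 2 < ⊤ := by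
    refine ae_lt_top ?_ ?_
    · exact (Measurable.lintegral_prod_right' (f := fun p : (Fin k → ℝ) × ℝ => tghF g p.2 p.1)
        (hF.comp measurable_swap)).pow_const 2
    · exact ((tgh_sq α hα₁ g hg hhom hint 0 t (hs.trans hst)).trans_lt ENNReal.ofReal_lt_top).ne
  have hbd : ∀ᵐ x : Fin k → ℝ, ‖tghKernel g lam t x - tghKernel g lam s x‖ₑ
      ≤ ∫⁻ u in Ioc s t, tghF g u x := by
    filter_upwards [hfin] with x hx
    have hx' : ∫⁻ u in Ioc 0 t, tghF g u x < ⊤ := by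
      by_contra h
      rw [not_lt, top_le_iff] at h
      simp [h] at hx
    have hI : IntegrableOn (Set.indicator {s' : ℝ | ∀ i, x i < s'}
      (fun s' => g (fun i => s' - x i) * Real.exp (-lam * ∑ i, (s' - x i)))) (Ioc 0 t) := by
      refine ⟨?_, (lintegral_mono fun u => tgh_kernel_bound g lam hlam u x).trans_lt hx'⟩
      refine (Measurable.indicator ?_ ?_).aestronglyMeasurable
      · exact (hg.comp (by fun_prop)).mul (by fun_prop)
      · have : {s' : ℝ | ∀ i, x i < s'} = ⋂ i, {s' | x i < s'} := by
          ext; simp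
        rw [this]
        exact MeasurableSet.iInter fun i => measurableSet_lt (by fun_prop) (by fun_prop)
    have hd : tghKernel g lam t x - tghKernel g lam s x = ∫ u in Ioc s t,
        Set.indicator {s' : ℝ | ∀ i, x i < s'}
      (fun s' => g (fun i => s' - x i) * Real.exp (-lam * ∑ i, (s' - x i))) u := by
      rw [tghKernel, tghKernel, ← Ioc_union_Ioc_eq_Ioc hs hst, setIntegral_union
        (Ioc_disjoint_Ioc_of_le le_rfl) measurableSet_Ioc
        (hI.mono_set (Ioc_subset_Ioc_right hst)) (hI.mono_set (Ioc_subset_Ioc_left hs))]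
      ring
    rw [hd]
    exact (enorm_integral_le_lintegral_enorm _).trans
      (lintegral_mono fun u => tgh_kernel_bound g lam hlam u x)
  rw [eLpNorm_eq_lintegral_rpow_enorm_toReal (by simp) (by simp)]
  have h2 : ∫⁻ x : Fin k → ℝ, ‖tghKernel g lam t x - tghKernel g lam s x‖ₑ ^ (2 : ENNReal).toReal
      ≤ _ := (lintegral_mono_ae (by
        filter_upwards [hbd] with x hx
        have : (2 : ENNReal).toReal = ((2 : ℕ) : ℝ) := by simp
        rw [this, ENNReal.rpow_natCast]
        exact pow_le_pow_left' hx 2)).trans (tgh_sq α hα₁ g hg hhom hint s t hst)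
  refine (ENNReal.rpow_le_rpow h2 (by simp)).trans ?_
  have hts : 0 ≤ t - s := by linarith
  have hA0 : 0 ≤ ∫ y in {y : Fin k → ℝ | ∀ i, 0 < y i}, |g y * g (fun i => 1 + y i)| :=
    integral_nonneg fun _ => abs_nonneg _
  have p1 : 0 < α + ((k : ℝ) + 1) / 2 := by linarith
  have p2 : 0 < 2 * α + (k : ℝ) + 2 := by linarith
  rw [ENNReal.ofReal_rpow_of_nonneg (by positivity) (by simp)]
  apply ENNReal.ofReal_le_ofReal
  rw [Real.mul_rpow (by positivity) (by positivity), ← Real.rpow_mul hts, abs_of_nonneg hts,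
    Real.sqrt_eq_rpow]
  apply le_of_eq
  simp only [ENNReal.toReal_ofNat]
  congr 2
  ring

theorem stmt7 {k : ℕ} (hk : 1 ≤ k) (α : ℝ)
    (hα₁ : -((k : ℝ) + 1) / 2 < α) (hα₂ : α < -(k : ℝ) / 2)
    (g : (Fin k → ℝ) → ℝ) (hg : Measurable g)
    (hhom : ∀ c : ℝ, 0 < c → ∀ x : Fin k → ℝ, (∀ i, 0 < x i) →
      g (c • x) = c ^ α * g x)
    (hint : IntegrableOn (fun y : Fin k → ℝ => |g y * g (fun i => 1 + y i)|)
      {y : Fin k → ℝ | ∀ i, 0 < y i})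
    (lam : ℝ) (hlam : 0 < lam) (s t : ℝ) (hs : 0 ≤ s) (ht : 0 ≤ t) :
    eLpNorm (fun x : Fin k → ℝ => tghKernel g lam t x - tghKernel g lam s x) 2
        (volume : Measure (Fin k → ℝ)) ≤
      ENNReal.ofReal
        (Real.sqrt ((∫ y in {y : Fin k → ℝ | ∀ i, 0 < y i},
            |g y * g (fun i => 1 + y i)|) /
          ((α + ((k : ℝ) + 1) / 2) * (2 * α + (k : ℝ) + 2))) *
          |t - s| ^ (α + 1 + (k : ℝ) / 2)) := by
  rcases le_total s t with h | h
  · exact tgh_main α hα₁ g hg hhom hint lam hlam s t hs h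
  · have := tgh_main α hα₁ g hg hhom hint lam hlam t s ht h
    rw [abs_sub_comm t s]
    refine le_trans (le_of_eq ?_) this
    exact eLpNorm_sub_comm (tghKernel g lam t) (tghKernel g lam s) 2 volume
end

section
/- Let ρ ∈ (−1, 0) and let β satisfy −ρ/2 − 1 < β < −ρ/2 with β ≠ 0. For t > 0 set l_t^β(s) = ((t−s)_+^β − (−s)_+^β)/β. Then ∫_ℝ ∫_0^∞ |l_t^β(s)| · |l_t^β(s+u)| · u^ρ du ds < ∞. -/
open MeasureTheory Real Set

/-- The fractional filter `l_t^β(s) = ((t−s)₊^β − (−s)₊^β)/β`. -/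
noncomputable def ell (t b s : ℝ) : ℝ :=
  ((max (t - s) 0) ^ b - (max (-s) 0) ^ b) / b

/-- The even two-power function. -/
noncomputable def mm (p q x : ℝ) : ℝ := min (x ^ p) (x ^ q)

lemma mm_nonneg (p q x : ℝ) (hx : 0 ≤ x) : 0 ≤ mm p q x :=
  le_min (rpow_nonneg hx _) (rpow_nonneg hx _)

lemma mm_measurable (p q : ℝ) : Measurable (mm p q) := by
  unfold mm; fun_prop

lemma mm_integrableOn (p q : ℝ) (hp : -1 < p) (hq : q < -1) :
    IntegrableOn (mm p q) (Ioi 0) := by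
  have hU : Ioi (0:ℝ) = Ioc 0 1 ∪ Ioi 1 := (Ioc_union_Ioi_eq_Ioi zero_le_one).symm
  rw [hU]
  apply IntegrableOn.union
  · have h1 : IntegrableOn (fun x : ℝ => x ^ p) (Ioc 0 1) :=
      (intervalIntegrable_iff_integrableOn_Ioc_of_le zero_le_one).1
        (intervalIntegral.intervalIntegrable_rpow' hp)
    refine Integrable.mono' h1 (mm_measurable p q).aestronglyMeasurable ?_
    filter_upwards [ae_restrict_mem measurableSet_Ioc] with x hx
    rw [Real.norm_of_nonneg (mm_nonneg p q x hx.1.le)]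
    exact min_le_left _ _
  · refine Integrable.mono' (integrableOn_Ioi_rpow_of_lt hq zero_lt_one)
      (mm_measurable p q).aestronglyMeasurable ?_
    filter_upwards [ae_restrict_mem measurableSet_Ioi] with x hx
    have hx0 : (0:ℝ) ≤ x := zero_le_one.trans (le_of_lt hx)
    rw [Real.norm_of_nonneg (mm_nonneg p q x hx0)]
    exact min_le_right _ _

lemma mm_integrable (p q : ℝ) (hp : -1 < p) (hq : q < -1) :
    Integrable (fun x : ℝ => mm p q |x|) := by
  have h0 := mm_integrableOn p q hp hq
  have h1 : IntegrableOn (fun x : ℝ => mm p q |x|) (Ioi 0) :=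
    h0.congr_fun (fun x hx => by simp [abs_of_pos (show (0:ℝ) < x from hx)]) measurableSet_Ioi
  have h2 : IntegrableOn (fun x : ℝ => mm p q |x|) (Iio 0) := by
    have h1' : IntegrableOn (fun x : ℝ => mm p q |x|) (Ioi (-0)) := by simpa using h1
    simpa using h1'.comp_neg_Iio
  have h3 : IntegrableOn (fun x : ℝ => mm p q |x|) (Iic 0) :=
    (integrableOn_Iic_iff_integrableOn_Iio (by simp)).2 h2
  rw [← integrableOn_univ, ← Iic_union_Ioi (a := (0:ℝ))]
  exact h3.union h1

lemma mm_le (p q r x : ℝ) (hx : 0 < x) (h1 : r ≤ p) (h2 : q ≤ r) : mm p q x ≤ x ^ r := by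
  rcases le_total x 1 with h | h
  · exact (min_le_left _ _).trans (rpow_le_rpow_of_exponent_ge hx h h1)
  · exact (min_le_right _ _).trans (rpow_le_rpow_of_exponent_le h h2)

lemma mm_anti (p q x y : ℝ) (hp : p ≤ 0) (hq : q ≤ 0) (hx : 0 < x) (hxy : x ≤ y) :
    mm p q y ≤ mm p q x :=
  min_le_min (rpow_le_rpow_of_nonpos hx hxy hp) (rpow_le_rpow_of_nonpos hx hxy hq)

lemma mm_mul (p q g x : ℝ) (hx : 0 < x) : mm p q x * x ^ g = mm (p + g) (q + g) x := by
  unfold mm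
  rw [rpow_add hx, rpow_add hx, min_mul_of_nonneg _ _ (rpow_nonneg hx.le _)]

/-- pointwise bound for the model potential kernel -/
lemma ker_bound (g : ℝ) (hg1 : -1/2 < g) (hg2 : g < 0) (v : ℝ) (hv : 0 < v) (hv1 : v ≠ 1) :
    |v - 1| ^ (-1 - g) * v ^ (2 * g) ≤
      2 * (mm (2 * g) (g - 1) |v| + mm (-1 - g) (-2) |v - 1|) := by
  have hx : 0 < |v - 1| := abs_pos.2 (sub_ne_zero.2 hv1)
  have hm1 := mm_nonneg (2 * g) (g - 1) |v| (abs_nonneg _)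
  have hm2 := mm_nonneg (-1 - g) (-2) |v - 1| (abs_nonneg _)
  have two1 : (2:ℝ) ^ (1 + g) ≤ 2 := by
    calc (2:ℝ) ^ (1 + g) ≤ 2 ^ (1:ℝ) := rpow_le_rpow_of_exponent_le (by norm_num) (by linarith)
      _ = 2 := rpow_one _
  have two2 : (2:ℝ) ^ (-(2 * g)) ≤ 2 := by
    calc (2:ℝ) ^ (-(2*g)) ≤ 2 ^ (1:ℝ) := rpow_le_rpow_of_exponent_le (by norm_num) (by linarith)
      _ = 2 := rpow_one _
  rw [abs_of_pos hv] at *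
  have hvp : 0 < v ^ (2 * g) := rpow_pos_of_pos hv _
  have hxp : 0 < |v - 1| ^ (-1 - g) := rpow_pos_of_pos hx _
  have half : ∀ r : ℝ, (1/2 : ℝ) ^ r = 2 ^ (-r) := fun r => by
    rw [one_div, inv_rpow (by norm_num), rpow_neg (by norm_num)]
  rcases le_total v (1/2) with h | h
  · have e : mm (2 * g) (g - 1) v = v ^ (2 * g) :=
      min_eq_left (rpow_le_rpow_of_exponent_ge hv (by linarith) (by linarith))
    have : |v - 1| ^ (-1 - g) ≤ 2 := by
      refine le_trans (rpow_le_rpow_of_nonpos (x := 1/2) (by norm_num) ?_ (by linarith)) ?_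
      · rw [abs_of_neg (by linarith)]; linarith
      · rw [half]; rw [neg_sub, sub_neg_eq_add, add_comm]; exact two1
    nlinarith
  rcases le_total v 2 with h' | h'
  · have hx1 : |v - 1| ≤ 1 := abs_le.2 ⟨by linarith, by linarith⟩
    have e : mm (-1 - g) (-2) |v - 1| = |v - 1| ^ (-1 - g) :=
      min_eq_left (rpow_le_rpow_of_exponent_ge hx hx1 (by linarith))
    have : v ^ (2 * g) ≤ 2 := by
      refine le_trans (rpow_le_rpow_of_nonpos (x := 1/2) (by norm_num) h (by linarith)) ?_
      rw [half]; exact two2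
    nlinarith
  · have e : mm (2 * g) (g - 1) v = v ^ (g - 1) :=
      min_eq_right (rpow_le_rpow_of_exponent_le (by linarith) (by linarith))
    have : |v - 1| ^ (-1 - g) ≤ 2 * v ^ (-1 - g) := by
      refine le_trans (rpow_le_rpow_of_nonpos (x := 1/2 * v) (by linarith) ?_ (by linarith)) ?_
      · rw [abs_of_pos (by linarith)]; linarith
      · rw [mul_rpow (by norm_num) hv.le, half]
        gcongr
        rw [neg_sub, sub_neg_eq_add, add_comm]; exact two1
    have e2 : v ^ (g - 1) = v ^ (-1 - g) * v ^ (2 * g) := by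
      rw [← rpow_add hv]; congr 1; ring
    rw [e, e2]
    nlinarith

lemma ker_integrable (g : ℝ) (hg1 : -1/2 < g) (hg2 : g < 0) :
    IntegrableOn (fun v : ℝ => |v - 1| ^ (-1 - g) * v ^ (2 * g)) (Ioi 0) := by
  have h1 := (mm_integrable (2 * g) (g - 1) (by linarith) (by linarith))
  have h2 := (mm_integrable (-1 - g) (-2) (by linarith) (by norm_num)).comp_sub_right 1
  refine Integrable.mono' ((h1.add h2).const_mul 2).integrableOn
    (by fun_prop : Measurable _).aestronglyMeasurable ?_
  filter_upwards [ae_restrict_mem measurableSet_Ioi, ae_restrict_of_ae (Measure.ae_ne volume 1)]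
    with v hv hv1
  have hv0 : (0:ℝ) < v := hv
  rw [Real.norm_of_nonneg (by positivity)]
  exact ker_bound g hg1 hg2 v hv0 hv1

lemma pot (g : ℝ) (hg1 : -1/2 < g) (hg2 : g < 0) :
    ∃ K : ℝ, 0 ≤ K ∧ ∀ s : ℝ, s ≠ 0 →
      ∫⁻ u in Ioi (0:ℝ), ENNReal.ofReal (|s + u| ^ (-1 - g) * u ^ (2 * g)) ≤
        ENNReal.ofReal (K * |s| ^ g) := by
  have hI := ker_integrable g hg1 hg2
  refine ⟨∫ v in Ioi (0:ℝ), |v - 1| ^ (-1 - g) * v ^ (2 * g), ?_, ?_⟩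
  · exact setIntegral_nonneg measurableSet_Ioi fun v hv => by
      have : (0:ℝ) < v := hv
      positivity
  intro s hs
  have hc : 0 < |s| := abs_pos.2 hs
  have hci : 0 < |s|⁻¹ := inv_pos.2 hc
  set f : ℝ → ℝ := fun v => |v - 1| ^ (-1 - g) * v ^ (2 * g) with hf
  have hI2 : IntegrableOn (fun u => |s| ^ (g - 1) * f (|s|⁻¹ * u)) (Ioi 0) := by
    have := (integrableOn_Ioi_comp_mul_left_iff f 0 hci).2 (by simpa using hI)
    exact this.const_mul _
  have hval : ∫ u in Ioi (0:ℝ), |s| ^ (g - 1) * f (|s|⁻¹ * u) =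
      (∫ v in Ioi (0:ℝ), f v) * |s| ^ g := by
    rw [integral_const_mul, integral_comp_mul_left_Ioi f 0 hci]
    rw [rpow_sub hc, rpow_one]
    simp
    field_simp
  have hnn : 0 ≤ᵐ[volume.restrict (Ioi 0)] fun u => |s| ^ (g - 1) * f (|s|⁻¹ * u) := by
    filter_upwards [ae_restrict_mem measurableSet_Ioi] with u hu
    have : (0:ℝ) < u := hu
    simp only [hf, Pi.zero_apply]
    positivity
  rw [← hval, ofReal_integral_eq_lintegral_ofReal hI2 hnn]
  refine lintegral_mono_ae ?_
  filter_upwards [ae_restrict_mem measurableSet_Ioi,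
    ae_restrict_of_ae (Measure.ae_ne volume |s|)] with u hu hus
  have hu0 : (0:ℝ) < u := hu
  apply ENNReal.ofReal_le_ofReal
  have e : |s| ^ (g - 1) * f (|s|⁻¹ * u) = |(u - |s|)| ^ (-1 - g) * u ^ (2 * g) := by
    simp only [hf]
    have e1 : |s|⁻¹ * u - 1 = |s|⁻¹ * (u - |s|) := by field_simp
    rw [e1, abs_mul, abs_of_pos hci, mul_rpow hci.le (abs_nonneg _), mul_rpow hci.le hu0.le,
      inv_rpow hc.le, inv_rpow hc.le, ← rpow_neg hc.le, ← rpow_neg hc.le]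
    have e2 : |s| ^ (g - 1) * |s| ^ (-(-1 - g)) * |s| ^ (-(2 * g)) = 1 := by
      rw [← rpow_add hc, ← rpow_add hc, ← rpow_zero |s|]; congr 1; ring
    linear_combination (|(u - |s|)| ^ (-1 - g) * u ^ (2 * g)) * e2
  rw [e]
  refine mul_le_mul_of_nonneg_right ?_ (rpow_nonneg hu0.le _)
  refine rpow_le_rpow_of_nonpos (abs_pos.2 (sub_ne_zero.2 hus)) ?_ (by linarith)
  calc |(u - |s|)| = |(|u| - |-s|)| := by rw [abs_of_pos hu0, abs_neg]
    _ ≤ |u - -s| := abs_abs_sub_abs_le _ _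
    _ = |s + u| := by congr 1; ring

lemma ell_far (t b s : ℝ) (ht : 0 < t) (hb : b ≠ 0) (hb1 : b < 1) (hs : s ≤ -t) :
    |ell t b s| ≤ t * (-s) ^ (b - 1) := by
  have hs0 : 0 < -s := by linarith
  have hd : ∀ x ∈ Icc (-s) (t - s), HasDerivWithinAt (fun x : ℝ => x ^ b) (b * x ^ (b - 1))
      (Icc (-s) (t - s)) x := fun x hx =>
    (Real.hasDerivAt_rpow_const (Or.inl (by linarith [hx.1] : (0:ℝ) < x).ne')).hasDerivWithinAt
  have key := norm_image_sub_le_of_norm_deriv_le_segment' (C := |b| * (-s) ^ (b - 1)) hd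
    (fun x hx => by
      have hx0 : 0 < x := by linarith [hx.1]
      rw [Real.norm_eq_abs, abs_mul, abs_of_pos (rpow_pos_of_pos hx0 _)]
      gcongr ?_ * ?_
      exact rpow_le_rpow_of_nonpos hs0 hx.1 (by linarith)) (t - s) ⟨by linarith, le_rfl⟩
  have hbp : 0 < |b| := abs_pos.2 hb
  unfold ell
  rw [max_eq_left (by linarith), max_eq_left hs0.le, abs_div, div_le_iff₀ hbp]
  rw [Real.norm_eq_abs] at key
  refine key.trans (le_of_eq ?_)
  ring

lemma near_bound (t b p x : ℝ) (ht : 0 < t) (hp : p ≤ b) (hx : 0 < x) (hx2 : x ≤ 2 * t) :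
    x ^ b ≤ ((2 * t) ^ (b - p) + 2 * t) * mm p (b - 1) x := by
  have hA : 0 < (2 * t) ^ (b - p) := by positivity
  have h1 : x ^ b ≤ (2 * t) ^ (b - p) * x ^ p := by
    rw [show b = (b - p) + p by ring, rpow_add hx, show (b - p) + p - p = b - p by ring]
    gcongr
  have h2 : x ^ b ≤ 2 * t * x ^ (b - 1) := by
    rw [show x ^ b = x * x ^ (b - 1) by rw [rpow_sub hx, rpow_one]; field_simp]
    gcongr
  have a1 : 0 < x ^ p := by positivity
  have a2 : 0 < x ^ (b - 1) := by positivity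
  unfold mm
  rw [mul_min_of_nonneg _ _ (by positivity)]
  apply le_min <;> nlinarith

lemma ell_bound (t b p : ℝ) (ht : 0 < t) (hb : b ≠ 0) (hb1 : b < 1) (hp : p ≤ b) (hp' : b - 1 ≤ p) :
    ∃ C : ℝ, 0 ≤ C ∧ ∀ s : ℝ, s ≠ 0 → s ≠ t →
      |ell t b s| ≤ C * (mm p (b - 1) |s| + mm p (b - 1) |s - t|) := by
  have hbp : 0 < |b| := abs_pos.2 hb
  set C1 := (2 * t) ^ (b - p) + 2 * t with hC1
  set C2 := t * (1 + t ^ (b - 1 - p)) with hC2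
  have h1 : 0 < C1 := by positivity
  have h2 : 0 < C2 := by positivity
  refine ⟨C1 / |b| + C2, by positivity, fun s hs hst => ?_⟩
  have m1 := mm_nonneg p (b - 1) |s| (abs_nonneg _)
  have m2 := mm_nonneg p (b - 1) |s - t| (abs_nonneg _)
  have hq : 0 < C1 / |b| := by positivity
  rcases lt_or_gt_of_ne hst with h | h
  swap
  · have : ell t b s = 0 := by
      unfold ell
      rw [max_eq_right (by linarith), max_eq_right (by linarith)]; simp
    rw [this, abs_zero]; positivity
  rcases le_or_gt s (-t) with h' | h'
  · have hs0 : 0 < -s := by linarith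
    have k := ell_far t b s ht hb hb1 h'
    have k2 : (-s) ^ (b - 1) ≤ (1 + t ^ (b - 1 - p)) * mm p (b - 1) |s| := by
      rw [abs_of_neg (by linarith)]
      have a1 : 0 < (-s) ^ p := by positivity
      have a2 : 0 < (-s) ^ (b - 1) := by positivity
      have a3 : 0 < t ^ (b - 1 - p) := by positivity
      have a4 : (-s) ^ (b - 1) ≤ t ^ (b - 1 - p) * (-s) ^ p := by
        have : (-s) ^ (b - 1) = (-s) ^ (b - 1 - p) * (-s) ^ p := by
          rw [← rpow_add hs0]; congr 1; ring
        rw [this]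
        gcongr ?_ * _
        exact rpow_le_rpow_of_nonpos ht (by linarith) (by linarith)
      unfold mm
      rw [mul_min_of_nonneg _ _ (by positivity)]
      apply le_min <;> nlinarith
    have k3 : |ell t b s| ≤ C2 * mm p (b - 1) |s| := by
      refine k.trans ?_
      rw [hC2, mul_assoc]
      gcongr
    nlinarith [mul_nonneg hq.le m1, mul_nonneg hq.le m2, mul_nonneg h2.le m2]
  · have k1 : (t - s) ^ b ≤ C1 * mm p (b - 1) |s - t| := by
      rw [abs_of_neg (by linarith), neg_sub]
      exact near_bound t b p _ ht hp (by linarith) (by linarith)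
    have k2 : (max (-s) 0) ^ b ≤ C1 * mm p (b - 1) |s| := by
      rcases lt_or_gt_of_ne hs with hn | hn
      · rw [abs_of_neg hn, max_eq_left (by linarith)]
        exact near_bound t b p _ ht hp (by linarith) (by linarith)
      · rw [max_eq_right (by linarith), zero_rpow hb]; positivity
    have k3 : |ell t b s| ≤ C1 / |b| * (mm p (b - 1) |s| + mm p (b - 1) |s - t|) := by
      unfold ell
      rw [max_eq_left (by linarith : (0:ℝ) ≤ t - s), abs_div, div_mul_eq_mul_div]
      gcongr
      have n1 : 0 ≤ (t - s) ^ b := rpow_nonneg (by linarith) _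
      have n2 : 0 ≤ (max (-s) 0) ^ b := rpow_nonneg (le_max_right _ _) _
      rw [abs_le]; constructor <;> nlinarith
    nlinarith [mul_nonneg h2.le m1, mul_nonneg h2.le m2]

lemma cross (p q g x y : ℝ) (hp : p ≤ 0) (hq : q ≤ 0) (hg : g ≤ 0) (hx : 0 < x) (hy : 0 < y) :
    (mm p q x + mm p q y) * (x ^ g + y ^ g) ≤
      2 * (mm (p + g) (q + g) x + mm (p + g) (q + g) y) := by
  rw [← mm_mul p q g x hx, ← mm_mul p q g y hy]
  rcases le_total x y with h | h
  · nlinarith [mul_nonneg (sub_nonneg.2 (mm_anti p q x y hp hq hx h))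
      (sub_nonneg.2 (rpow_le_rpow_of_nonpos hx h hg))]
  · nlinarith [mul_nonneg (sub_nonneg.2 (mm_anti p q y x hp hq hy h))
      (sub_nonneg.2 (rpow_le_rpow_of_nonpos hy h hg))]

theorem stmt9 (ρ : ℝ) (hρ₁ : -1 < ρ) (hρ₂ : ρ < 0)
    (b : ℝ) (hb : b ≠ 0) (hb₁ : -ρ/2 - 1 < b) (hb₂ : b < -ρ/2)
    (t : ℝ) (ht : 0 < t) :
    (∫⁻ s : ℝ, ∫⁻ u in Set.Ioi (0 : ℝ),
      ENNReal.ofReal (|ell t b s| * |ell t b (s + u)| * u ^ ρ)) < ⊤ := by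
  obtain ⟨g, rfl⟩ : ∃ g, ρ = 2 * g := ⟨ρ / 2, by ring⟩
  have hg1 : -1/2 < g := by linarith
  have hg2 : g < 0 := by linarith
  have hb1 : -1 - g < b := by linarith
  have hb2 : b < -g := by linarith
  obtain ⟨K, hK, hpot⟩ := pot g hg1 hg2
  set p := min b 0 with hp
  have hpb : p ≤ b := min_le_left _ _
  have hp0 : p ≤ 0 := min_le_right _ _
  have hpg : -1 - g < p := lt_min hb1 (by linarith)
  obtain ⟨C, hC, hell⟩ := ell_bound t b p ht hb (by linarith) hpb
    (le_min (by linarith) (by linarith))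
  have hM := mm_integrable (p + g) (b - 1 + g) (by linarith) (by linarith)
  have hM2 := ((hM.add (hM.comp_sub_right t)).const_mul (2 * C ^ 2 * K))
  refine lt_of_le_of_lt (lintegral_mono_ae ?_) hM2.lintegral_lt_top
  filter_upwards [Measure.ae_ne volume 0, Measure.ae_ne volume t] with s hs hst
  have hst' : s - t ≠ 0 := sub_ne_zero.2 hst
  have hL : 0 ≤ |ell t b s| * C := by positivity
  calc ∫⁻ u in Set.Ioi (0 : ℝ), ENNReal.ofReal (|ell t b s| * |ell t b (s + u)| * u ^ (2 * g))
      ≤ ∫⁻ u in Set.Ioi (0 : ℝ), ENNReal.ofReal (|ell t b s| * C) *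
          (ENNReal.ofReal (|s + u| ^ (-1 - g) * u ^ (2 * g)) +
           ENNReal.ofReal (|s - t + u| ^ (-1 - g) * u ^ (2 * g))) := by
        refine lintegral_mono_ae ?_
        filter_upwards [ae_restrict_mem measurableSet_Ioi,
          ae_restrict_of_ae (Measure.ae_ne volume (-s)),
          ae_restrict_of_ae (Measure.ae_ne volume (t - s))] with u hu hu1 hu2
        have hu0 : (0:ℝ) < u := hu
        have n1 : s + u ≠ 0 := fun h => hu1 (by linarith)
        have n2 : s + u ≠ t := fun h => hu2 (by linarith)
        rw [← ENNReal.ofReal_add (by positivity) (by positivity), ← ENNReal.ofReal_mul hL]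
        apply ENNReal.ofReal_le_ofReal
        have k := hell (s + u) n1 n2
        have k1 := mm_le p (b - 1) (-1 - g) |s + u| (abs_pos.2 n1) hpg.le (by linarith)
        have k2 := mm_le p (b - 1) (-1 - g) |s + u - t| (abs_pos.2 (sub_ne_zero.2 n2)) hpg.le
          (by linarith)
        rw [show s - t + u = s + u - t by ring, ← add_mul, ← mul_assoc, mul_assoc |ell t b s| C]
        gcongr
        refine k.trans ?_
        gcongr
    _ = ENNReal.ofReal (|ell t b s| * C) *
          ((∫⁻ u in Set.Ioi (0 : ℝ), ENNReal.ofReal (|s + u| ^ (-1 - g) * u ^ (2 * g))) +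
           ∫⁻ u in Set.Ioi (0 : ℝ), ENNReal.ofReal (|s - t + u| ^ (-1 - g) * u ^ (2 * g))) := by
        rw [lintegral_const_mul _ (by fun_prop), lintegral_add_left (by fun_prop)]
    _ ≤ ENNReal.ofReal (|ell t b s| * C) *
          (ENNReal.ofReal (K * |s| ^ g) + ENNReal.ofReal (K * |s - t| ^ g)) := by
        gcongr
        · exact hpot s hs
        · exact hpot (s - t) hst'
    _ = ENNReal.ofReal (|ell t b s| * C * (K * (|s| ^ g + |s - t| ^ g))) := by
        rw [← ENNReal.ofReal_add (by positivity) (by positivity), ← ENNReal.ofReal_mul hL, ← mul_add K]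
    _ ≤ _ := by
        apply ENNReal.ofReal_le_ofReal
        have k := hell s hs hst
        have c := cross p (b - 1) g |s| |s - t| hp0 (by linarith) hg2.le (abs_pos.2 hs)
          (abs_pos.2 hst')
        calc |ell t b s| * C * (K * (|s| ^ g + |s - t| ^ g))
            ≤ C * (mm p (b - 1) |s| + mm p (b - 1) |s - t|) * C *
                (K * (|s| ^ g + |s - t| ^ g)) := by gcongr
          _ = C ^ 2 * K * ((mm p (b - 1) |s| + mm p (b - 1) |s - t|) *
                (|s| ^ g + |s - t| ^ g)) := by ring
          _ ≤ C ^ 2 * K * (2 * (mm (p + g) (b - 1 + g) |s| +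
                mm (p + g) (b - 1 + g) |s - t|)) := by gcongr
          _ = _ := by simp only [Pi.add_apply]; ring
end

section
/- Let k ≥ 1, d ∈ (1/2 − 1/(2k), 1/2), λ > 0, and for t ≥ 0 set h_t^λ(x) = ∫_0^t ∏_{i=1}^k (s − x_i)_+^{d−1} e^{−λ(s−x_i)_+} ds for x ∈ ℝ^k. Then for all s, t ≥ 0, ∫_{ℝ^k} h_t^λ(x) h_s^λ(x) dx = ∫_0^t ∫_0^s [ (|u−v|/2)^{2d−1} ∫_1^∞ (w² − 1)^{d−1} e^{−λ|u−v| w} dw ]^k dv du, with absolute convergence. -/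
open MeasureTheory Real Set

/-- The kernel `h_t^λ` of the tempered Hermite process:
`h_t^λ(x) = ∫_0^t ∏ᵢ (s−xᵢ)₊^{d−1} e^{−λ(s−xᵢ)₊} ds`. -/
noncomputable def tHermiteKernel (k : ℕ) (d lam t : ℝ) (x : Fin k → ℝ) : ℝ :=
  ∫ s in Set.Ioc (0 : ℝ) t,
    ∏ i, ((max (s - x i) 0) ^ (d - 1) * Real.exp (-lam * max (s - x i) 0))

/-- one-dimensional tempered kernel -/
noncomputable def tk1 (d lam z : ℝ) : ℝ := (max z 0) ^ (d - 1) * Real.exp (-lam * max z 0)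

lemma tk1_nonneg (d lam z : ℝ) : 0 ≤ tk1 d lam z := by
  unfold tk1; positivity

lemma tk1_measurable (d lam : ℝ) : Measurable (tk1 d lam) := by
  unfold tk1; fun_prop

lemma tk1_of_pos {d lam z : ℝ} (hz : 0 < z) : tk1 d lam z = z ^ (d - 1) * Real.exp (-lam * z) := by
  unfold tk1; rw [max_eq_left hz.le]

lemma tk1_of_nonpos {d lam z : ℝ} (hd : d < 1/2) (hz : z ≤ 0) : tk1 d lam z = 0 := by
  unfold tk1; rw [max_eq_right hz, Real.zero_rpow (by linarith), zero_mul]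

lemma base_integrable {d : ℝ} (hd0 : 0 < d) (hd : d < 1/2) :
    IntegrableOn (fun w : ℝ => (w ^ 2 - 1) ^ (d - 1)) (Ioi 1) := by
  have hm : Measurable (fun w : ℝ => (w ^ 2 - 1) ^ (d - 1)) := by fun_prop
  rw [← Ioc_union_Ioi_eq_Ioi (show (1:ℝ) ≤ 2 by norm_num)]
  refine IntegrableOn.union ?_ ?_
  · have h1 : IntervalIntegrable (fun x : ℝ => x ^ (d - 1)) volume 0 1 :=
      intervalIntegral.intervalIntegrable_rpow' (by linarith)
    have h2 := h1.comp_sub_right 1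
    rw [intervalIntegrable_iff, uIoc_of_le (by norm_num)] at h2
    norm_num at h2
    refine Integrable.mono' h2 hm.aestronglyMeasurable ?_
    refine (ae_restrict_iff' measurableSet_Ioc).2 (Filter.Eventually.of_forall fun w hw => ?_)
    have hw1 : 0 < w - 1 := by linarith [hw.1]
    have hw2 : w - 1 ≤ w ^ 2 - 1 := by nlinarith
    rw [Real.norm_of_nonneg (Real.rpow_nonneg (by linarith) _)]
    exact Real.rpow_le_rpow_of_nonpos hw1 hw2 (by linarith)
  · have h1 : IntegrableOn (fun x : ℝ => x ^ (2 * (d - 1))) (Ioi 2) :=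
      integrableOn_Ioi_rpow_of_lt (by linarith) (by norm_num)
    have h2 := h1.const_mul ((1 / 4 : ℝ) ^ (d - 1))
    refine Integrable.mono' h2 hm.aestronglyMeasurable ?_
    refine (ae_restrict_iff' measurableSet_Ioi).2 (Filter.Eventually.of_forall fun w hw => ?_)
    have hw' : 2 < w := hw
    have hw0 : 0 < 1 / 4 * w ^ 2 := by positivity
    have hw2 : 1 / 4 * w ^ 2 ≤ w ^ 2 - 1 := by nlinarith
    rw [Real.norm_of_nonneg (Real.rpow_nonneg (by linarith) _)]
    refine (Real.rpow_le_rpow_of_nonpos hw0 hw2 (by linarith)).trans (le_of_eq ?_)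
    rw [Real.mul_rpow (by norm_num) (by positivity), Real.rpow_mul (by linarith)]
    norm_num

lemma temp_integrable {d c : ℝ} (hd0 : 0 < d) (hd : d < 1/2) (hc : 0 ≤ c) :
    IntegrableOn (fun w : ℝ => (w ^ 2 - 1) ^ (d - 1) * Real.exp (-c * w)) (Ioi 1) := by
  refine Integrable.mono' (base_integrable hd0 hd)
    (Measurable.aestronglyMeasurable (by fun_prop)) ?_
  refine (ae_restrict_iff' measurableSet_Ioi).2 (Filter.Eventually.of_forall fun w hw => ?_)
  have hw' : 1 < w := hw
  have h0 : 0 ≤ (w ^ 2 - 1) ^ (d - 1) := Real.rpow_nonneg (by nlinarith) _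
  rw [Real.norm_of_nonneg (by positivity)]
  refine mul_le_of_le_one_right h0 (Real.exp_le_one_iff.2 ?_)
  nlinarith

/-- The bracket. -/
noncomputable def tC (d lam a : ℝ) : ℝ :=
  (a / 2) ^ (2 * d - 1) * ∫ w in Ioi (1 : ℝ), (w ^ 2 - 1) ^ (d - 1) * Real.exp (-lam * a * w)

lemma tC_nonneg {d lam a : ℝ} (ha : 0 ≤ a) : 0 ≤ tC d lam a := by
  unfold tC
  refine mul_nonneg (by positivity) (setIntegral_nonneg measurableSet_Ioi fun w hw => ?_)
  have hw' : 1 < w := hw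
  exact mul_nonneg (Real.rpow_nonneg (by nlinarith) _) (Real.exp_pos _).le

lemma tC_le {d lam a : ℝ} (hd0 : 0 < d) (hd : d < 1/2) (hl : 0 < lam) (ha : 0 ≤ a) :
    tC d lam a ≤ (a / 2) ^ (2 * d - 1) * ∫ w in Ioi (1 : ℝ), (w ^ 2 - 1) ^ (d - 1) := by
  unfold tC
  refine mul_le_mul_of_nonneg_left ?_ (by positivity)
  have := temp_integrable hd0 hd (mul_nonneg hl.le ha)
  simp only [← neg_mul] at this
  refine setIntegral_mono_on this (base_integrable hd0 hd) measurableSet_Ioi fun w hw => ?_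
  have hw' : 1 < w := hw
  have h0 : 0 ≤ (w ^ 2 - 1) ^ (d - 1) := Real.rpow_nonneg (by nlinarith) _
  refine mul_le_of_le_one_right h0 (Real.exp_le_one_iff.2 ?_)
  have : 0 ≤ lam * a * w := by positivity
  linarith

lemma one_dim_lt {d lam u v : ℝ} (hd0 : 0 < d) (hd : d < 1/2) (hl : 0 < lam) (huv : v < u) :
    Integrable (fun y => tk1 d lam (u - y) * tk1 d lam (v - y)) ∧
    ∫ y, tk1 d lam (u - y) * tk1 d lam (v - y) = tC d lam (u - v) := by
  set b : ℝ := (u - v) / 2 with hb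
  have hb0 : 0 < b := by rw [hb]; linarith
  set H : ℝ → ℝ := fun y => tk1 d lam (u - y) * tk1 d lam (v - y) with hH
  have key : (fun w => H ((u + v) / 2 - b * w)) = (Ioi (1:ℝ)).indicator (fun w =>
      b ^ (2 * d - 2) * ((w ^ 2 - 1) ^ (d - 1) * Real.exp (-lam * (u - v) * w))) := by
    funext w
    by_cases hw : w ∈ Ioi (1:ℝ)
    · have hw' : 1 < w := hw
      rw [indicator_of_mem hw]
      simp only [hH]
      have e1 : u - ((u + v) / 2 - b * w) = b * (w + 1) := by rw [hb]; ring
      have e2 : v - ((u + v) / 2 - b * w) = b * (w - 1) := by rw [hb]; ring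
      have p1 : 0 < w + 1 := by linarith
      have p2 : 0 < w - 1 := by linarith
      rw [e1, e2, tk1_of_pos (by positivity), tk1_of_pos (by positivity),
        Real.mul_rpow hb0.le p1.le, Real.mul_rpow hb0.le p2.le,
        show w ^ 2 - 1 = (w + 1) * (w - 1) by ring, Real.mul_rpow p1.le p2.le,
        show 2 * d - 2 = (d - 1) + (d - 1) by ring, Real.rpow_add hb0,
        show -lam * (u - v) * w = -lam * (b * (w + 1)) + -lam * (b * (w - 1)) by rw [hb]; ring,
        Real.exp_add]
      ring
    · have hw' : w ≤ 1 := not_lt.1 hw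
      rw [indicator_of_notMem hw]
      simp only [hH]
      have e2 : v - ((u + v) / 2 - b * w) = b * (w - 1) := by rw [hb]; ring
      rw [e2, tk1_of_nonpos (z := b * (w - 1)) hd (by nlinarith), mul_zero]
  have hI : Integrable (fun w => H ((u + v) / 2 - b * w)) := by
    rw [key, integrable_indicator_iff measurableSet_Ioi]
    have := temp_integrable hd0 hd (mul_nonneg hl.le (sub_nonneg.2 huv.le))
    simp only [← neg_mul] at this
    exact this.const_mul _
  have hI2 : Integrable (fun w => H ((u + v) / 2 - w)) :=
    (integrable_comp_mul_left_iff (fun w => H ((u + v) / 2 - w)) hb0.ne').1 hI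
  have hI3 : Integrable H := by
    have := hI2.comp_sub_left ((u + v) / 2)
    simpa using this
  refine ⟨hI3, ?_⟩
  have h1 := Measure.integral_comp_mul_left (fun w => H ((u + v) / 2 - w)) b
  rw [integral_sub_left_eq_self H volume ((u + v) / 2)] at h1
  rw [key, integral_indicator measurableSet_Ioi, integral_const_mul, abs_of_pos (by positivity),
    smul_eq_mul] at h1
  have h2 : ∫ y, H y = b * (b⁻¹ * ∫ y, H y) := by field_simp
  rw [h2, ← h1]
  unfold tC
  rw [← hb, show 2 * d - 1 = 1 + (2 * d - 2) by ring, Real.rpow_add hb0, Real.rpow_one]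
  ring

lemma one_dim {d lam u v : ℝ} (hd0 : 0 < d) (hd : d < 1/2) (hl : 0 < lam) (huv : u ≠ v) :
    Integrable (fun y => tk1 d lam (u - y) * tk1 d lam (v - y)) ∧
    ∫ y, tk1 d lam (u - y) * tk1 d lam (v - y) = tC d lam |u - v| := by
  rcases lt_or_gt_of_ne huv with h | h
  · have := one_dim_lt hd0 hd hl h
    rw [abs_sub_comm, abs_of_pos (sub_pos.2 h)]
    simpa only [mul_comm] using this
  · rw [abs_of_pos (sub_pos.2 h)]
    exact one_dim_lt hd0 hd hl h

lemma abs_rpow_integrable {p s t : ℝ} (hp : -1 < p) :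
    Integrable (fun z : ℝ × ℝ => |z.1 - z.2| ^ p)
      ((volume.restrict (Ioc 0 t)).prod (volume.restrict (Ioc 0 s))) := by
  set T := |s| + |t| with hT
  have h1 : IntegrableOn (fun y : ℝ => |y| ^ p) (Ioc (-T) T) := by
    have hT0 : 0 ≤ T := by positivity
    have hpos : IntervalIntegrable (fun y : ℝ => |y| ^ p) volume 0 T := by
      refine (intervalIntegral.intervalIntegrable_rpow' (a := 0) (b := T) hp).congr ?_
      intro x hx
      rw [uIoc_of_le hT0] at hx
      simp only [abs_of_pos hx.1]
    have hneg : IntervalIntegrable (fun y : ℝ => |y| ^ p) volume (-T) 0 := by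
      have := (hpos.comp_sub_left 0).symm
      simpa using this
    have := hneg.trans hpos
    rwa [intervalIntegrable_iff, uIoc_of_le (by linarith)] at this
  have h2 : Integrable ((Ioc 0 s).indicator (fun _ : ℝ => (1:ℝ))) := by
    rw [integrable_indicator_iff measurableSet_Ioc]
    exact integrableOn_const (by simp)
  have h3 := Integrable.convolution_integrand (ContinuousLinearMap.mul ℝ ℝ) h2
    ((integrable_indicator_iff measurableSet_Ioc).2 h1)
  rw [Measure.prod_restrict]
  refine (h3.integrableOn (s := Ioc 0 t ×ˢ Ioc 0 s)).congr_fun ?_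
    (measurableSet_Ioc.prod measurableSet_Ioc)
  rintro ⟨u, v⟩ ⟨hu, hv⟩
  simp only [mem_Ioc] at hu hv
  simp only [ContinuousLinearMap.mul_apply']
  have := le_abs_self s
  have := le_abs_self t
  have := abs_nonneg s
  have := abs_nonneg t
  rcases eq_or_ne t 0 with h0 | h0
  · subst h0; linarith
  rw [indicator_of_mem (by exact hv), indicator_of_mem, one_mul]
  simp only [mem_Ioc]
  constructor <;> linarith

theorem stmt13 {k : ℕ} (hk : 1 ≤ k) (d : ℝ)
    (hd₁ : 1/2 - 1/(2*(k : ℝ)) < d) (hd₂ : d < 1/2)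
    (lam : ℝ) (hlam : 0 < lam) (s t : ℝ) (hs : 0 ≤ s) (ht : 0 ≤ t) :
    -- absolute convergence
    Integrable (fun x : Fin k → ℝ =>
      tHermiteKernel k d lam t x * tHermiteKernel k d lam s x) ∧
    -- the covariance identity
    (∫ x : Fin k → ℝ, tHermiteKernel k d lam t x * tHermiteKernel k d lam s x) =
      ∫ u in Set.Ioc (0 : ℝ) t, ∫ v in Set.Ioc (0 : ℝ) s,
        ((|u - v| / 2) ^ (2 * d - 1) *
          ∫ w in Set.Ioi (1 : ℝ),
            (w ^ 2 - 1) ^ (d - 1) * Real.exp (-lam * |u - v| * w)) ^ k := by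
  have hk1 : (1:ℝ) ≤ k := by exact_mod_cast hk
  have hk0 : (0:ℝ) < k := by linarith
  have hd0 : 0 < d := by
    have : 1/(2*(k : ℝ)) ≤ 1/2 := by
      apply one_div_le_one_div_of_le <;> linarith
    linarith
  have hp : -1 < (2 * d - 1) * k := by
    have h1 : 1/(2*(k : ℝ)) * (2 * k) = 1 := by field_simp
    have h2 : (1/2 - 1/(2*(k : ℝ))) * (2 * k) < d * (2 * k) :=
      mul_lt_mul_of_pos_right hd₁ (by linarith)
    nlinarith
  set μ : Measure (ℝ × ℝ) :=
    (volume.restrict (Ioc 0 t)).prod (volume.restrict (Ioc 0 s)) with hμ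
  set Φ : (ℝ × ℝ) × (Fin k → ℝ) → ℝ := fun z =>
    (∏ i, tk1 d lam (z.1.1 - z.2 i)) * ∏ i, tk1 d lam (z.1.2 - z.2 i) with hΦ
  have hΦ' : ∀ z, Φ z = ∏ i, (tk1 d lam (z.1.1 - z.2 i) * tk1 d lam (z.1.2 - z.2 i)) := by
    intro z; simp only [hΦ, Finset.prod_mul_distrib]
  have hΦ0 : ∀ z, 0 ≤ Φ z := fun z => by
    rw [hΦ']
    exact Finset.prod_nonneg fun i _ => mul_nonneg (tk1_nonneg _ _ _) (tk1_nonneg _ _ _)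
  have hΦm : Measurable Φ := by
    have := tk1_measurable d lam
    simp only [hΦ]
    fun_prop
  have hne : ∀ᵐ z : ℝ × ℝ ∂μ, z.1 ≠ z.2 := by
    have h0 : ∀ᵐ z : ℝ × ℝ ∂((volume : Measure ℝ).prod volume), z.1 ≠ z.2 := by
      have hms : MeasurableSet {z : ℝ × ℝ | z.1 ≠ z.2} :=
        (measurableSet_eq_fun measurable_fst measurable_snd).compl
      rw [Measure.ae_prod_iff_ae_ae hms]
      refine Filter.Eventually.of_forall fun x => ?_
      have : ∀ᵐ y : ℝ, y ≠ x := by simp [ae_iff]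
      filter_upwards [this] with y hy using hy.symm
    rw [hμ, Measure.prod_restrict]
    exact ae_restrict_of_ae h0
  have hΦint : ∀ z : ℝ × ℝ, z.1 ≠ z.2 → Integrable (fun x => Φ (z, x)) ∧
      ∫ x, Φ (z, x) = (tC d lam |z.1 - z.2|) ^ k := by
    intro z hz
    have h1 := one_dim hd0 hd₂ hlam hz
    simp only [hΦ']
    constructor
    · exact Integrable.fintype_prod (f := fun (_ : Fin k) y =>
        tk1 d lam (z.1 - y) * tk1 d lam (z.2 - y)) fun _ => h1.1
    · rw [integral_fintype_prod_volume_eq_pow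
        (fun y => tk1 d lam (z.1 - y) * tk1 d lam (z.2 - y)), h1.2, Fintype.card_fin]
  have hΦI : Integrable Φ (μ.prod volume) := by
    rw [integrable_prod_iff hΦm.aestronglyMeasurable]
    refine ⟨hne.mono fun z hz => (hΦint z hz).1, ?_⟩
    simp only [Real.norm_of_nonneg (hΦ0 _)]
    set J := ∫ w in Ioi (1 : ℝ), (w ^ 2 - 1) ^ (d - 1)
    have hb := (abs_rpow_integrable (s := s) (t := t) hp).const_mul
      (((1 / 2 : ℝ) ^ (2 * d - 1) * J) ^ k)
    refine Integrable.mono' hb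
      (hΦm.stronglyMeasurable.integral_prod_right').aestronglyMeasurable ?_
    filter_upwards [hne] with z hz
    have ha : 0 ≤ |z.1 - z.2| := abs_nonneg _
    rw [(hΦint z hz).2, Real.norm_of_nonneg (pow_nonneg (tC_nonneg ha) _)]
    refine (pow_le_pow_left₀ (tC_nonneg ha) (tC_le hd0 hd₂ hlam ha) k).trans (le_of_eq ?_)
    rw [Real.rpow_mul ha, Real.rpow_natCast, ← mul_pow, div_eq_mul_one_div,
      Real.mul_rpow ha (by norm_num)]
    congr 1
    ring
  have hh : ∀ x : Fin k → ℝ, ∫ z, Φ (z, x) ∂μ =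
      tHermiteKernel k d lam t x * tHermiteKernel k d lam s x := fun x =>
    integral_prod_mul (fun u => ∏ i, tk1 d lam (u - x i)) (fun v => ∏ i, tk1 d lam (v - x i))
  have hres := hΦI.integral_prod_right
  simp only [hh] at hres
  refine ⟨hres, ?_⟩
  have hC : (fun z => ∫ x, Φ (z, x)) =ᵐ[μ] fun z => (tC d lam |z.1 - z.2|) ^ k :=
    hne.mono fun z hz => (hΦint z hz).2
  have hCI : Integrable (fun z : ℝ × ℝ => (tC d lam |z.1 - z.2|) ^ k) μ :=
    hΦI.integral_prod_left.congr hC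
  calc _ = ∫ x, ∫ z, Φ (z, x) ∂μ := by simp only [hh]
    _ = ∫ z, (∫ x, Φ (z, x)) ∂μ := (integral_integral_swap (f := fun z x => Φ (z, x)) hΦI).symm
    _ = ∫ z, (tC d lam |z.1 - z.2|) ^ k ∂μ := integral_congr_ae hC
    _ = _ := integral_prod _ hCI
end

section
/- Let k ≥ 1, a ∈ (−1/2 − 1/(2k), −1/2), β ≠ 0 with −ka − k/2 − 1 < β < −ka − k/2, and let g₀ : (0,∞) → ℝ be measurable with g₀(c y) = c^a g₀(y) for all c > 0 and ∫_0^∞ |g₀(y) g₀(1+y)| dy < ∞; set g(x₁,…,x_k) = ∏_{i=1}^k g₀(x_i). Then for every λ > 0 and s, t ∈ ℝ, ∫_{ℝ^k} h_t^{λ,β}(x) h_s^{λ,β}(x) dx = ∫_ℝ ∫_ℝ l_s^β(u) l_t^β(v) · e^{−λ k |u−v|} · |u−v|^{k(2a+1)} · ( ∫_0^∞ g₀(y) g₀(1+y) e^{−2λ|u−v| y} dy )^k du dv, with absolute convergence. -/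
open MeasureTheory Real Set

/-- The fractionally filtered tempered generalized Hermite kernel `h_t^{λ,β}`
with product kernel `g(x₁,…,x_k) = ∏ᵢ g₀(xᵢ)`. -/
noncomputable def tghFiltProdKernel (k : ℕ) (g₀ : ℝ → ℝ) (lam b t : ℝ)
    (x : Fin k → ℝ) : ℝ :=
  ∫ s : ℝ, ell t b s *
    Set.indicator {s' : ℝ | ∀ i, x i < s'}
      (fun s' => ∏ i, (g₀ (s' - x i) * Real.exp (-lam * (s' - x i)))) s

lemma aux_comp_abs {f : ℝ → ℝ} (hf : IntegrableOn f (Ioi 0)) : Integrable (fun x : ℝ => f |x|) := by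
  have h1 : Integrable ((Ioi (0:ℝ)).indicator f) := (integrable_indicator_iff measurableSet_Ioi).2 hf
  have h2 := h1.add h1.comp_neg
  refine h2.congr ?_
  have h0 : ∀ᵐ x : ℝ, x ≠ 0 := by simp [ae_iff]
  filter_upwards [h0] with x hx
  rcases lt_or_gt_of_ne hx with h | h
  · have h' : ¬ (0 < x) := by linarith
    simp [indicator, h, h', abs_of_neg h]
  · have h' : ¬ (x < 0) := by linarith
    simp [indicator, h, h', abs_of_pos h]

lemma aux_ell_point (t b p : ℝ) (hp : 0 < p) (hb : b ≠ 0) (h2 : (b - 1) * p < -1) (x : ℝ) :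
    |(max (t + x) 0) ^ b - (max x 0) ^ b| ^ p ≤
      (Ioc (0:ℝ) (3 * (|t| + 1))).indicator (fun y => y ^ (b * p)) (t + x)
      + (Ioc (0:ℝ) (3 * (|t| + 1))).indicator (fun y => y ^ (b * p)) x
      + (|b| * |t|) ^ p * (Ioi (1:ℝ)).indicator (fun y => y ^ ((b - 1) * p)) (x - |t|) := by
  have hP : ∀ y : ℝ, 0 ≤ (Ioc (0:ℝ) (3 * (|t| + 1))).indicator (fun y => y ^ (b * p)) y := by
    intro y
    apply indicator_nonneg
    intro z hz
    exact rpow_nonneg hz.1.le _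
  have hQ : ∀ y : ℝ, 0 ≤ (Ioi (1:ℝ)).indicator (fun y => y ^ ((b - 1) * p)) y := by
    intro y
    apply indicator_nonneg
    intro z hz
    have hz : 1 < z := hz
    exact rpow_nonneg (by linarith) _
  have hC : 0 ≤ (|b| * |t|) ^ p := by positivity
  have hb1 : b - 1 < 0 := by
    by_contra hcon
    push Not at hcon
    nlinarith [mul_nonneg hcon hp.le]
  have ht := abs_nonneg t
  have ht1 := le_abs_self t
  have ht2 := neg_abs_le t
  by_cases hx : x ≤ 2 * (|t| + 1)
  · have key : ∀ y : ℝ, y ≤ 3 * (|t| + 1) → ((max y 0) ^ b) ^ p =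
        (Ioc (0:ℝ) (3 * (|t| + 1))).indicator (fun y => y ^ (b * p)) y := by
      intro y hy
      by_cases hy0 : 0 < y
      · rw [indicator_of_mem (show y ∈ Ioc (0:ℝ) (3 * (|t| + 1)) from ⟨hy0, hy⟩), max_eq_left hy0.le,
          rpow_mul hy0.le]
      · rw [indicator_of_notMem (fun h => hy0 h.1), max_eq_right (not_lt.1 hy0), zero_rpow hb,
          zero_rpow hp.ne']
    have e1 := key (t + x) (by linarith)
    have e2 := key x (by linarith)
    have n1 : 0 ≤ (max (t + x) 0) ^ b := rpow_nonneg (le_max_right _ _) _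
    have n2 : 0 ≤ (max x 0) ^ b := rpow_nonneg (le_max_right _ _) _
    have n3 := mul_nonneg hC (hQ (x - |t|))
    have m1 := hP (t + x)
    have m2 := hP x
    rcases le_total ((max (t + x) 0) ^ b) ((max x 0) ^ b) with h | h
    · have : |(max (t + x) 0) ^ b - (max x 0) ^ b| ^ p ≤ ((max x 0) ^ b) ^ p := by
        apply rpow_le_rpow (abs_nonneg _) _ hp.le
        rw [abs_le]; constructor <;> linarith
      linarith
    · have : |(max (t + x) 0) ^ b - (max x 0) ^ b| ^ p ≤ ((max (t + x) 0) ^ b) ^ p := by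
        apply rpow_le_rpow (abs_nonneg _) _ hp.le
        rw [abs_le]; constructor <;> linarith
      linarith
  · push Not at hx
    have hc : 0 < x - |t| := by linarith
    rw [max_eq_left (by linarith), max_eq_left (by linarith),
      indicator_of_mem (show x - |t| ∈ Ioi (1:ℝ) from by simp only [mem_Ioi]; linarith)]
    have hm : |(t + x) ^ b - x ^ b| ≤ |b| * (x - |t|) ^ (b - 1) * |t| := by
      have := (convex_Ici (x - |t|)).norm_image_sub_le_of_norm_hasDerivWithin_le
        (f := fun y : ℝ => y ^ b) (f' := fun y => b * y ^ (b - 1)) (C := |b| * (x - |t|) ^ (b - 1))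
        (x := x) (y := t + x)
        (fun y hy => by
          have hy : x - |t| ≤ y := hy
          exact (Real.hasDerivAt_rpow_const (Or.inl (by linarith))).hasDerivWithinAt)
        (fun y hy => by
          have hy : x - |t| ≤ y := hy
          rw [norm_mul, norm_eq_abs, norm_eq_abs, abs_of_nonneg (rpow_nonneg (by linarith) _)]
          exact mul_le_mul_of_nonneg_left (rpow_le_rpow_of_nonpos hc hy hb1.le) (abs_nonneg _))
        (by simp only [mem_Ici]; linarith) (by simp only [mem_Ici]; linarith)
      simpa [norm_eq_abs] using this
    have : |(t + x) ^ b - x ^ b| ^ p ≤ (|b| * |t|) ^ p * (x - |t|) ^ ((b - 1) * p) := by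
      calc |(t + x) ^ b - x ^ b| ^ p ≤ (|b| * (x - |t|) ^ (b - 1) * |t|) ^ p :=
            rpow_le_rpow (abs_nonneg _) hm hp.le
        _ = ((|b| * |t|) * (x - |t|) ^ (b - 1)) ^ p := by ring_nf
        _ = _ := by
            rw [mul_rpow (by positivity) (rpow_nonneg hc.le _), rpow_mul hc.le]
    have m1 := hP (t + x)
    have m2 := hP x
    linarith

lemma aux_ell_meas (t b : ℝ) : Measurable (ell t b) := by
  unfold ell
  fun_prop

lemma aux_ell_int (t b p : ℝ) (hp : 0 < p) (hb : b ≠ 0) (h1 : -1 < b * p)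
    (h2 : (b - 1) * p < -1) : Integrable (fun x => |ell t b x| ^ p) := by
  have hP : Integrable ((Ioc (0:ℝ) (3 * (|t| + 1))).indicator (fun y => y ^ (b * p))) := by
    rw [integrable_indicator_iff measurableSet_Ioc,
      ← intervalIntegrable_iff_integrableOn_Ioc_of_le (by positivity)]
    exact intervalIntegral.intervalIntegrable_rpow' h1
  have hQ : Integrable ((Ioi (1:ℝ)).indicator (fun y => y ^ ((b - 1) * p))) := by
    rw [integrable_indicator_iff measurableSet_Ioi]
    exact integrableOn_Ioi_rpow_of_lt h2 one_pos
  have hD := ((hP.comp_add_left t).add hP).add ((hQ.comp_sub_right |t|).const_mul ((|b| * |t|) ^ p))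
  have hE : Integrable (fun x : ℝ => |(max (t + x) 0) ^ b - (max x 0) ^ b| ^ p) := by
    refine hD.mono' (by fun_prop : Measurable _).aestronglyMeasurable (Filter.Eventually.of_forall fun x => ?_)
    rw [norm_eq_abs, abs_of_nonneg (by positivity)]
    exact aux_ell_point t b p hp hb h2 x
  refine (hE.comp_neg.mul_const ((|b|⁻¹) ^ p)).congr (Filter.Eventually.of_forall fun x => ?_)
  simp only [ell, div_eq_mul_inv, abs_mul, abs_inv, ← sub_eq_add_neg]
  rw [mul_rpow (abs_nonneg _) (by positivity)]

lemma aux_young {f g K : ℝ → ℝ} {θ p q : ℝ} (hθ : 0 < θ) (hθ1 : θ < 1)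
    (hp : p * (1 - θ / 2) = 1) (hq : q * θ = 1)
    (hf : ∀ x, 0 ≤ f x) (hg : ∀ x, 0 ≤ g x) (hK : ∀ x, 0 ≤ K x)
    (mf : Measurable f) (mg : Measurable g) (mK : Measurable K)
    (jf : Integrable (fun x => f x ^ p)) (jg : Integrable (fun x => g x ^ p))
    (jK : Integrable (fun x => K x ^ q)) :
    Integrable (fun z : ℝ × ℝ => f z.1 * g z.2 * K (z.1 - z.2)) := by
  have i1 : Integrable (fun z : ℝ × ℝ => f z.1 ^ p * g z.2 ^ p) := jf.mul_prod jg
  have i3 : Integrable (fun z : ℝ × ℝ => K (z.1 - z.2) ^ q * g z.2 ^ p) :=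
    (measurePreserving_sub_prod (volume : Measure ℝ) (volume : Measure ℝ)).integrable_comp_of_integrable
      (jK.mul_prod jg)
  have jK' : Integrable (fun x => K (-x) ^ q) := jK.comp_neg
  have i2 : Integrable (fun z : ℝ × ℝ => K (z.1 - z.2) ^ q * f z.1 ^ p) := by
    have := (measurePreserving_sub_prod (volume : Measure ℝ) (volume : Measure ℝ)).integrable_comp_of_integrable
      (jK'.mul_prod jf)
    rw [Measure.volume_eq_prod]
    simpa [Function.comp_def] using this.swap
  refine ((((i1.const_mul (1 - θ))).add (i2.const_mul (θ/2))).add (i3.const_mul (θ/2))).mono'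
    (by fun_prop : Measurable _).aestronglyMeasurable (Filter.Eventually.of_forall fun z => ?_)
  have a1 := hf z.1
  have a2 := hg z.2
  have a3 := hK (z.1 - z.2)
  rw [norm_eq_abs, abs_of_nonneg (by positivity)]
  simp only [Pi.add_apply]
  refine le_trans (le_of_eq ?_) (geom_mean_le_arith_mean3_weighted (w₁ := 1 - θ) (w₂ := θ/2) (w₃ := θ/2)
    (by linarith) (by linarith) (by linarith) (by positivity) (by positivity) (by positivity) (by ring))
  generalize f z.1 = F at *
  generalize g z.2 = G at *
  generalize K (z.1 - z.2) = L at *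
  rw [mul_rpow (by positivity) (by positivity), mul_rpow (by positivity) (by positivity),
    mul_rpow (by positivity) (by positivity), ← rpow_mul a1, ← rpow_mul a1, ← rpow_mul a2,
    ← rpow_mul a2, ← rpow_mul a3]
  have hp0 : 0 < p := by
    by_contra h
    nlinarith
  have hq0 : 0 < q := by
    by_contra h
    nlinarith
  have e1 : ∀ X : ℝ, 0 ≤ X → X ^ (p * (1 - θ)) * X ^ (p * (θ/2)) = X := by
    intro X hX
    rw [← rpow_add_of_nonneg hX (by nlinarith) (by nlinarith), show p * (1-θ) + p * (θ/2) = 1 by linarith,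
      rpow_one]
  have e2 : L ^ (q * (θ/2)) * L ^ (q * (θ/2)) = L := by
    rw [← rpow_add_of_nonneg a3 (by nlinarith) (by nlinarith), show q * (θ/2) + q * (θ/2) = 1 by linarith,
      rpow_one]
  calc F * G * L = (F ^ (p * (1 - θ)) * F ^ (p * (θ/2))) * (G ^ (p * (1 - θ)) * G ^ (p * (θ/2))) *
      (L ^ (q * (θ/2)) * L ^ (q * (θ/2))) := by rw [e1 F a1, e1 G a2, e2]
    _ = _ := by ring

lemma aux_ker_int (c γ q : ℝ) (hc : 0 < c) (hq : 0 < q) (h : -1 < γ * q) :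
    Integrable (fun w : ℝ => (exp (-c * |w|) * |w| ^ γ) ^ q) := by
  have := integrableOn_rpow_mul_exp_neg_mul_rpow (p := 1) (s := γ * q) (b := c * q) h one_pos
    (by positivity)
  refine (aux_comp_abs this).congr (Filter.Eventually.of_forall fun w => ?_)
  simp only [rpow_one]
  rw [mul_rpow (exp_pos _).le (by positivity), ← rpow_mul (abs_nonneg w), ← exp_mul]
  ring_nf

lemma aux_dom (c γ b s t : ℝ) (hc : 0 < c) (hγ : -1 < γ) (hγ0 : γ < 0) (hb : b ≠ 0)
    (hb1 : -γ / 2 - 1 < b) (hb2 : b < -γ / 2) :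
    Integrable (fun z : ℝ × ℝ => |ell s b z.1| * |ell t b z.2| *
      (exp (-c * |z.1 - z.2|) * |z.1 - z.2| ^ γ)) := by
  obtain ⟨θ, hθl, hθr⟩ := exists_between (show -γ < min 1 (2 * (1 + b)) from lt_min (by linarith) (by linarith))
  have hθ1 := lt_of_lt_of_le hθr (min_le_left _ _)
  have hθ2 := lt_of_lt_of_le hθr (min_le_right _ _)
  have hθ : 0 < θ := by linarith
  have hd : 0 < 1 - θ / 2 := by linarith
  have hp : 0 < (1 - θ/2)⁻¹ := inv_pos.2 hd
  have hpe : (1 - θ/2)⁻¹ * (1 - θ/2) = 1 := inv_mul_cancel₀ hd.ne'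
  have hq : 0 < θ⁻¹ := inv_pos.2 hθ
  have hqe : θ⁻¹ * θ = 1 := inv_mul_cancel₀ hθ.ne'
  have hj : ∀ t, Integrable (fun x => |ell t b x| ^ (1 - θ/2)⁻¹) := fun t =>
    aux_ell_int t b _ hp hb (by nlinarith) (by nlinarith)
  exact aux_young (f := fun x => |ell s b x|) (g := fun x => |ell t b x|)
    (K := fun w => exp (-c * |w|) * |w| ^ γ) hθ hθ1 hpe hqe
    (fun _ => abs_nonneg _) (fun _ => abs_nonneg _) (fun _ => by positivity)
    (aux_ell_meas s b).abs (aux_ell_meas t b).abs (by fun_prop) (hj s) (hj t)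
    (aux_ker_int c γ _ hc hq (by nlinarith))

/-- one-dimensional tempered factor -/
noncomputable def auxPhi (g : ℝ → ℝ) (lam u x : ℝ) : ℝ :=
  if x < u then g (u - x) * exp (-lam * (u - x)) else 0

lemma aux_one_lt (a : ℝ) (g : ℝ → ℝ)
    (hhom : ∀ c : ℝ, 0 < c → ∀ y : ℝ, 0 < y → g (c * y) = c ^ a * g y)
    (hint : IntegrableOn (fun y : ℝ => g y * g (1 + y)) (Set.Ioi (0 : ℝ)))
    (lam : ℝ) (hlam : 0 < lam) (u v : ℝ) (huv : u < v) :
    Integrable (fun x => auxPhi g lam u x * auxPhi g lam v x) ∧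
    ∫ x, auxPhi g lam u x * auxPhi g lam v x = exp (-lam * |u - v|) * |u - v| ^ (2 * a + 1) *
      ∫ y in Ioi (0:ℝ), g y * g (1 + y) * exp (-2 * lam * |u - v| * y) := by
  have hw : |u - v| = v - u := by rw [abs_sub_comm, abs_of_pos (by linarith)]
  rw [hw]
  set w := v - u with hwd
  have hw0 : 0 < w := by linarith
  have hv : v = u + w := by linarith
  set F : ℝ → ℝ := fun x => auxPhi g lam u x * auxPhi g lam v x with hF
  have hE : ∀ z, F (u - w * z) = (Ioi (0:ℝ)).indicator
      (fun z => (w ^ (2 * a) * exp (-lam * w)) * (g z * g (1 + z) * exp (-2 * lam * w * z))) z := by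
    intro z
    by_cases hz : 0 < z
    · rw [indicator_of_mem (show z ∈ Ioi (0:ℝ) from hz)]
      have hwz : 0 < w * z := mul_pos hw0 hz
      simp only [hF, auxPhi]
      rw [if_pos (by linarith), if_pos (by linarith), show u - (u - w * z) = w * z by ring,
        show v - (u - w * z) = w * (1 + z) by rw [hv]; ring, hhom w hw0 z hz,
        hhom w hw0 (1 + z) (by linarith), two_mul a, rpow_add hw0]
      have : exp (-lam * w) * exp (-2 * lam * w * z) =
          exp (-lam * (w * z)) * exp (-lam * (w * (1 + z))) := by
        rw [← exp_add, ← exp_add]; ring_nf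
      linear_combination (-(w ^ a * w ^ a * g z * g (1 + z))) * this
    · rw [indicator_of_notMem (show z ∉ Ioi (0:ℝ) from hz)]
      have : w * z ≤ 0 := mul_nonpos_of_nonneg_of_nonpos hw0.le (not_lt.1 hz)
      simp only [hF, auxPhi]
      rw [if_neg (by linarith), zero_mul]
  have hI : IntegrableOn (fun z => g z * g (1 + z) * exp (-2 * lam * w * z)) (Ioi 0) := by
    refine Integrable.mul_bdd (c := 1) hint (by fun_prop) ?_
    refine (ae_restrict_iff' measurableSet_Ioi).2 (Filter.Eventually.of_forall fun z hz => ?_)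
    have hz : 0 < z := hz
    rw [norm_eq_abs, abs_exp]
    apply exp_le_one_iff.2
    have : 0 < lam * w * z := by positivity
    linarith
  constructor
  · rw [← integrable_comp_sub_left F u, ← integrable_comp_mul_left_iff _ hw0.ne']
    simp only [hE]
    rw [integrable_indicator_iff measurableSet_Ioi]
    exact hI.const_mul _
  · have h1 := Measure.integral_comp_mul_left (fun x => F (u - x)) w
    rw [integral_sub_left_eq_self F volume u] at h1
    simp only [hE] at h1
    rw [integral_indicator measurableSet_Ioi, integral_const_mul, abs_of_pos (inv_pos.2 hw0),
      smul_eq_mul] at h1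
    have h2 : ∫ x, F x = w * (w⁻¹ * ∫ x, F x) := by field_simp
    rw [h2, ← h1, rpow_add hw0, rpow_one]
    ring

lemma aux_one (a : ℝ) (g : ℝ → ℝ)
    (hhom : ∀ c : ℝ, 0 < c → ∀ y : ℝ, 0 < y → g (c * y) = c ^ a * g y)
    (hint : IntegrableOn (fun y : ℝ => g y * g (1 + y)) (Set.Ioi (0 : ℝ)))
    (lam : ℝ) (hlam : 0 < lam) (u v : ℝ) (huv : u ≠ v) :
    Integrable (fun x => auxPhi g lam u x * auxPhi g lam v x) ∧
    ∫ x, auxPhi g lam u x * auxPhi g lam v x = exp (-lam * |u - v|) * |u - v| ^ (2 * a + 1) *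
      ∫ y in Ioi (0:ℝ), g y * g (1 + y) * exp (-2 * lam * |u - v| * y) := by
  rcases lt_or_gt_of_ne huv with h | h
  · exact aux_one_lt a g hhom hint lam hlam u v h
  · have := aux_one_lt a g hhom hint lam hlam v u h
    rw [abs_sub_comm u v]
    simpa only [mul_comm (auxPhi g lam u _)] using this

lemma aux_phi_prod (k : ℕ) (g₀ : ℝ → ℝ) (lam u : ℝ) (x : Fin k → ℝ) :
    Set.indicator {s' : ℝ | ∀ i, x i < s'}
      (fun s' => ∏ i, (g₀ (s' - x i) * Real.exp (-lam * (s' - x i)))) u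
      = ∏ i, auxPhi g₀ lam u (x i) := by
  by_cases h : ∀ i, x i < u
  · rw [indicator_of_mem (by exact h)]
    refine Finset.prod_congr rfl fun i _ => ?_
    rw [auxPhi, if_pos (h i)]
  · rw [indicator_of_notMem (by exact h)]
    push Not at h
    obtain ⟨i, hi⟩ := h
    symm
    apply Finset.prod_eq_zero (Finset.mem_univ i)
    rw [auxPhi, if_neg (not_lt.2 hi)]

lemma aux_phi_meas (g : ℝ → ℝ) (hg : Measurable g) (lam : ℝ) :
    Measurable (fun z : ℝ × ℝ => auxPhi g lam z.1 z.2) := by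
  unfold auxPhi
  exact Measurable.ite (measurableSet_lt measurable_snd measurable_fst) (by fun_prop) measurable_const

lemma aux_phi_abs (g : ℝ → ℝ) (lam u x : ℝ) :
    |auxPhi g lam u x| = auxPhi (fun y => |g y|) lam u x := by
  unfold auxPhi
  split_ifs <;> simp [abs_mul]

theorem stmt16 {k : ℕ} (hk : 1 ≤ k) (a : ℝ)
    (ha₁ : -1/2 - 1/(2*(k : ℝ)) < a) (ha₂ : a < -1/2)
    (b : ℝ) (hb : b ≠ 0)
    (hb₁ : -(k : ℝ) * a - (k : ℝ) / 2 - 1 < b) (hb₂ : b < -(k : ℝ) * a - (k : ℝ) / 2)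
    (g₀ : ℝ → ℝ) (hg₀ : Measurable g₀)
    (hhom : ∀ c : ℝ, 0 < c → ∀ y : ℝ, 0 < y → g₀ (c * y) = c ^ a * g₀ y)
    (hint : IntegrableOn (fun y : ℝ => |g₀ y * g₀ (1 + y)|) (Set.Ioi (0 : ℝ)))
    (lam : ℝ) (hlam : 0 < lam) (s t : ℝ) :
    -- absolute convergence
    Integrable (fun x : Fin k → ℝ =>
      tghFiltProdKernel k g₀ lam b t x * tghFiltProdKernel k g₀ lam b s x) ∧
    -- the covariance identity
    (∫ x : Fin k → ℝ,
        tghFiltProdKernel k g₀ lam b t x * tghFiltProdKernel k g₀ lam b s x) =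
      ∫ u : ℝ, ∫ v : ℝ,
        ell s b u * ell t b v * Real.exp (-lam * (k : ℝ) * |u - v|) *
          |u - v| ^ ((k : ℝ) * (2 * a + 1)) *
          (∫ y in Set.Ioi (0 : ℝ),
            g₀ y * g₀ (1 + y) * Real.exp (-2 * lam * |u - v| * y)) ^ k := by
  have hk0 : (0:ℝ) < k := by exact_mod_cast hk
  have hγ : -1 < (k:ℝ) * (2 * a + 1) := by
    have h1 : (k:ℝ) * (1 / (2 * (k:ℝ))) = 1 / 2 := by field_simp
    have h2 := mul_lt_mul_of_pos_left ha₁ hk0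
    linarith [mul_sub (k:ℝ) (-1/2) (1 / (2 * (k:ℝ)))]
  have hγ0 : (k:ℝ) * (2 * a + 1) < 0 := by nlinarith
  have hdom := aux_dom (lam * k) ((k:ℝ) * (2 * a + 1)) b s t (by positivity) hγ hγ0 hb
    (by linarith) (by linarith)
  have mphi := aux_phi_meas g₀ hg₀ lam
  have hhomA : ∀ c : ℝ, 0 < c → ∀ y : ℝ, 0 < y → |g₀ (c * y)| = c ^ a * |g₀ y| := by
    intro c hc y hy
    rw [hhom c hc y hy, abs_mul, abs_of_pos (rpow_pos_of_pos hc a)]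
  have hintS : IntegrableOn (fun y : ℝ => g₀ y * g₀ (1 + y)) (Ioi 0) := by
    refine (integrable_norm_iff ?_).1 hint
    exact (by fun_prop : Measurable (fun y : ℝ => g₀ y * g₀ (1 + y))).aestronglyMeasurable
  have hintA : IntegrableOn (fun y : ℝ => |g₀ y| * |g₀ (1 + y)|) (Ioi 0) := by
    simpa only [abs_mul] using hint
  have powid : ∀ w J : ℝ, 0 ≤ w → (exp (-lam * w) * w ^ (2 * a + 1) * J) ^ k =
      exp (-lam * k * w) * w ^ ((k:ℝ) * (2 * a + 1)) * J ^ k := by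
    intro w J hw
    rw [mul_pow, mul_pow, ← exp_nat_mul, mul_comm (k:ℝ) (2 * a + 1), rpow_mul hw, rpow_natCast]
    congr 3
    ring
  -- the triple integrand
  let Φ : (Fin k → ℝ) × (ℝ × ℝ) → ℝ := fun p =>
    ell s b p.2.1 * ell t b p.2.2 *
      ∏ i, (auxPhi g₀ lam p.2.1 (p.1 i) * auxPhi g₀ lam p.2.2 (p.1 i))
  have mΦ : Measurable Φ := by
    have m1 := aux_ell_meas s b
    have m2 := aux_ell_meas t b
    have m3 : ∀ i : Fin k, Measurable (fun p : (Fin k → ℝ) × (ℝ × ℝ) =>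
        auxPhi g₀ lam p.2.1 (p.1 i)) := fun i =>
      mphi.comp (by fun_prop : Measurable (fun p : (Fin k → ℝ) × (ℝ × ℝ) => (p.2.1, p.1 i)))
    have m4 : ∀ i : Fin k, Measurable (fun p : (Fin k → ℝ) × (ℝ × ℝ) =>
        auxPhi g₀ lam p.2.2 (p.1 i)) := fun i =>
      mphi.comp (by fun_prop : Measurable (fun p : (Fin k → ℝ) × (ℝ × ℝ) => (p.2.2, p.1 i)))
    refine Measurable.mul (by fun_prop) (Finset.measurable_prod _ fun i _ => (m3 i).mul (m4 i))
  have hne : ∀ᵐ z : ℝ × ℝ, z.1 ≠ z.2 := by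
    have hms : MeasurableSet {z : ℝ × ℝ | z.1 = z.2} := measurableSet_eq_fun measurable_fst measurable_snd
    rw [ae_iff]
    simp only [ne_eq, not_not]
    rw [Measure.volume_eq_prod, Measure.measure_prod_null hms]
    refine Filter.Eventually.of_forall fun x => ?_
    have : Prod.mk x ⁻¹' {z : ℝ × ℝ | z.1 = z.2} = {x} := by
      ext y; simp [eq_comm]
    show volume (Prod.mk x ⁻¹' {z : ℝ × ℝ | z.1 = z.2}) = 0
    rw [this]; simp
  have hΦ : Integrable Φ := by
    rw [Measure.volume_eq_prod, integrable_prod_iff' mΦ.aestronglyMeasurable]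
    constructor
    · filter_upwards [hne] with z hz
      rw [volume_pi]
      exact (Integrable.fintype_prod (f := fun _ : Fin k => fun x =>
        auxPhi g₀ lam z.1 x * auxPhi g₀ lam z.2 x) (μ := fun _ => volume)
        (fun _ => (aux_one a g₀ hhom hintS lam hlam z.1 z.2 hz).1)).const_mul (ell s b z.1 * ell t b z.2)
    · refine (hdom.mul_const ((∫ y in Ioi (0:ℝ), |g₀ y| * |g₀ (1 + y)|) ^ k)).mono'
        ?_ ?_
      · exact (mΦ.norm.stronglyMeasurable.integral_prod_left').aestronglyMeasurable
      · filter_upwards [hne] with z hz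
        have e : ∀ x : Fin k → ℝ, ‖Φ (x, z)‖ = |ell s b z.1| * |ell t b z.2| *
            ∏ i, (auxPhi (fun y => |g₀ y|) lam z.1 (x i) * auxPhi (fun y => |g₀ y|) lam z.2 (x i)) := by
          intro x
          simp only [Φ, norm_mul, norm_prod, norm_eq_abs, aux_phi_abs]
        simp only [e]
        rw [integral_const_mul, integral_fintype_prod_volume_eq_pow (fun x =>
          auxPhi (fun y => |g₀ y|) lam z.1 x * auxPhi (fun y => |g₀ y|) lam z.2 x), Fintype.card_fin,
          (aux_one a (fun y => |g₀ y|) hhomA hintA lam hlam z.1 z.2 hz).2, powid _ _ (abs_nonneg _)]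
        have hJ0 : 0 ≤ ∫ y in Ioi (0:ℝ), |g₀ y| * |g₀ (1 + y)| * exp (-2 * lam * |z.1 - z.2| * y) :=
          integral_nonneg fun y => by positivity
        have hJ : ∫ y in Ioi (0:ℝ), |g₀ y| * |g₀ (1 + y)| * exp (-2 * lam * |z.1 - z.2| * y) ≤
            ∫ y in Ioi (0:ℝ), |g₀ y| * |g₀ (1 + y)| := by
          refine integral_mono_of_nonneg (Filter.Eventually.of_forall fun y => by
            simp only [Pi.zero_apply]; positivity) hintA ?_
          refine (ae_restrict_iff' measurableSet_Ioi).2 (Filter.Eventually.of_forall fun y hy => ?_)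
          have hy : 0 < y := hy
          refine mul_le_of_le_one_right (by positivity) (exp_le_one_iff.2 ?_)
          have : 0 ≤ lam * |z.1 - z.2| * y := by positivity
          linarith
        rw [norm_eq_abs, abs_of_nonneg (by positivity)]
        rw [← mul_assoc, neg_mul lam (k:ℝ)]
        exact mul_le_mul_of_nonneg_left (pow_le_pow_left₀ hJ0 hJ k) (by positivity)
  have hX : ∀ x : Fin k → ℝ, ∫ z : ℝ × ℝ, Φ (x, z) =
      tghFiltProdKernel k g₀ lam b t x * tghFiltProdKernel k g₀ lam b s x := by
    intro x
    unfold tghFiltProdKernel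
    simp only [aux_phi_prod]
    rw [mul_comm, Measure.volume_eq_prod, ← integral_prod_mul]
    congr 1
    ext z
    simp only [Φ, Finset.prod_mul_distrib]
    ring
  rw [Measure.volume_eq_prod] at hΦ
  constructor
  · have := hΦ.integral_prod_left
    simpa only [hX] using this
  · have h1 := integral_prod _ hΦ
    have h2 := integral_prod_symm _ hΦ
    have h3 := hΦ.integral_prod_right
    simp only [hX] at h1
    rw [← h1, h2]
    have hS : (fun z : ℝ × ℝ => ∫ x : Fin k → ℝ, Φ (x, z)) =ᵐ[volume] fun z =>
        ell s b z.1 * ell t b z.2 * Real.exp (-lam * (k : ℝ) * |z.1 - z.2|) *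
          |z.1 - z.2| ^ ((k : ℝ) * (2 * a + 1)) *
          (∫ y in Set.Ioi (0 : ℝ),
            g₀ y * g₀ (1 + y) * Real.exp (-2 * lam * |z.1 - z.2| * y)) ^ k := by
      filter_upwards [hne] with z hz
      simp only [Φ]
      rw [integral_const_mul, integral_fintype_prod_volume_eq_pow (fun x =>
          auxPhi g₀ lam z.1 x * auxPhi g₀ lam z.2 x), Fintype.card_fin,
          (aux_one a g₀ hhom hintS lam hlam z.1 z.2 hz).2, powid _ _ (abs_nonneg _)]
      ring
    rw [integral_congr_ae hS]
    have h4 := h3.congr hS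
    rw [Measure.volume_eq_prod] at h4 ⊢
    exact integral_prod _ h4
end
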